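/- Let d ≥ 2. Suppose that on an event of probability ≥ δ/2, for all k ≥ n_0 the anchored isoperimetric constant satisfies k·φ̂_k(p_c) > c, and suppose that for every η > 0 the probability that a fixed face of [-n,n]^d contains more than (cα/(2d·2^d·k^d))·n^{d-1} vertices connected to 0 inside the box tends to at most a constant multiple of η. Then one reaches a contradiction; consequently P(liminf_n n·φ̂_n(p_c) = 0) = 1. -/

import Mathlib

open MeasureTheory Filter

/-- Vertices of the lattice `ℤ^d`. -/
abbrev Vtx (d : ℕ) := Fin d → ℤ

/-- A percolation configuration: a Boolean for each (unordered) pair of vertices; only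
the values on nearest-neighbor pairs matter. -/
abbrev Config (d : ℕ) := Sym2 (Vtx d) → Bool

/-- Nearest-neighbor adjacency in `ℤ^d`. -/
def adjV {d : ℕ} (x y : Vtx d) : Prop := (∑ i, |x i - y i|) = 1

/-- The edge between `x` and `y` exists and is open in the configuration `ω`. -/
def openAdj {d : ℕ} (ω : Config d) (x y : Vtx d) : Prop := adjV x y ∧ ω s(x, y) = true

/-- The open cluster of the origin. -/
def cluster {d : ℕ} (ω : Config d) : Set (Vtx d) :=
  {x | Relation.ReflTransGen (openAdj ω) 0 x}

/-- `μ` is the i.i.d. Bernoulli bond percolation measure of parameter `p`: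
cylinder events have the product probabilities. -/
def IsBernoulli {d : ℕ} (μ : Measure (Config d)) (p : ℝ) : Prop :=
  IsProbabilityMeasure μ ∧
  ∀ (S : Finset (Sym2 (Vtx d))) (f : Sym2 (Vtx d) → Bool),
    μ {ω | ∀ e ∈ S, ω e = f e} =
      ∏ e ∈ S, (if f e then ENNReal.ofReal p else ENNReal.ofReal (1 - p))

/-- The critical point of bond percolation on `ℤ^d`. -/
noncomputable def pcrit (d : ℕ) : ℝ :=
  sInf {p : ℝ | 0 ≤ p ∧ p ≤ 1 ∧ ∃ μ : Measure (Config d), IsBernoulli μ p ∧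
    0 < μ {ω | (cluster ω).Infinite}}

/-- The number of open edges between `H` and its complement. -/
noncomputable def openBoundaryCard {d : ℕ} (ω : Config d) (H : Finset (Vtx d)) : ℕ :=
  {p : Vtx d × Vtx d | p.1 ∈ H ∧ p.2 ∉ H ∧ openAdj ω p.1 p.2}.ncard

/-- The anchored isoperimetric profile `φ̂_n`: the infimum of `|∂^o H|/|H|` over connected
subgraphs `H` of the cluster of `0` containing `0` with `0 < |H| ≤ n^d`. -/
noncomputable def anchoredProfile {d : ℕ} (ω : Config d) (n : ℕ) : ℝ :=
  sInf {r : ℝ | ∃ H : Finset (Vtx d), 0 ∈ H ∧ (↑H : Set (Vtx d)) ⊆ cluster ω ∧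
    (∀ x ∈ H, Relation.ReflTransGen (fun a b => a ∈ H ∧ b ∈ H ∧ openAdj ω a b) 0 x) ∧
    0 < H.card ∧ H.card ≤ n ^ d ∧ r = (openBoundaryCard ω H : ℝ) / H.card}


/-! ### Part 1: local events for product Bernoulli measures -/

section Local

variable {E : Type*}

/-- Bernoulli weight on `Bool`. -/
noncomputable def bw (p : ℝ) : Measure Bool :=
  ENNReal.ofReal p • Measure.dirac true + ENNReal.ofReal (1 - p) • Measure.dirac false

lemma bw_prob {p : ℝ} (h0 : 0 ≤ p) (h1 : p ≤ 1) : IsProbabilityMeasure (bw p) := by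
  constructor
  simp only [bw, Measure.coe_add, Measure.coe_smul, Pi.add_apply, Pi.smul_apply, measure_univ,
    smul_eq_mul, mul_one]
  rw [← ENNReal.ofReal_add h0 (by linarith)]
  simp

lemma bw_singleton (p : ℝ) (b : Bool) :
    bw p {b} = if b then ENNReal.ofReal p else ENNReal.ofReal (1 - p) := by
  cases b <;> simp [bw]

/-- Generic version of `IsBernoulli`, with range condition on the parameter. -/
structure Bern (μ : Measure (E → Bool)) (p : ℝ) : Prop where
  h0 : 0 ≤ p
  h1 : p ≤ 1
  prob : IsProbabilityMeasure μ
  cyl : ∀ (S : Finset E) (f : E → Bool),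
    μ {ω | ∀ e ∈ S, ω e = f e} =
      ∏ e ∈ S, (if f e then ENNReal.ofReal p else ENNReal.ofReal (1 - p))

lemma Bern.eq_pi {μ : Measure (E → Bool)} {p : ℝ} (h : Bern μ p) :
    haveI := bw_prob h.h0 h.h1
    μ = Measure.infinitePi (fun _ : E => bw p) := by
  haveI := bw_prob h.h0 h.h1
  haveI := h.prob
  refine ((Measure.isProjectiveLimit_infinitePi (fun _ : E => bw p)).unique ?_).symm
  intro I
  classical
  refine Measure.ext_of_singleton (fun f => ?_)
  rw [Measure.pi_singleton, Measure.map_apply (by fun_prop) (measurableSet_singleton _)]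
  simp only [bw_singleton]
  have := h.cyl I (fun e => if he : e ∈ I then f ⟨e, he⟩ else false)
  rw [← Finset.prod_coe_sort I] at this
  simp only [Finset.coe_mem, dite_true, Subtype.coe_eta] at this
  rw [← this]
  congr 1
  ext ω
  simp only [Set.mem_preimage, Set.mem_singleton_iff, Set.mem_setOf_eq, funext_iff, Subtype.forall]
  constructor
  · intro hh e he; simpa [he] using hh e he
  · intro hh e he; simpa [he] using hh e he

lemma bern_infinitePi {p : ℝ} (h0 : 0 ≤ p) (h1 : p ≤ 1) :
    ∃ μ : Measure (E → Bool), Bern μ p := by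
  haveI := bw_prob h0 h1
  refine ⟨Measure.infinitePi (fun _ : E => bw p), h0, h1, inferInstance, fun S f => ?_⟩
  have : {ω : E → Bool | ∀ e ∈ S, ω e = f e} = Set.pi S (fun e => {f e}) := by
    ext ω; simp [Set.mem_pi]
  rw [this, Measure.infinitePi_pi _ (fun _ _ => measurableSet_singleton _)]
  simp only [bw_singleton]

/-- The event `B` depends only on the coordinates in `S`. -/
def DetBy (S : Finset E) (B : Set (E → Bool)) : Prop :=
  ∀ ω ω' : E → Bool, (∀ e ∈ S, ω e = ω' e) → (ω ∈ B ↔ ω' ∈ B)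

lemma DetBy.mono {S T : Finset E} {B : Set (E → Bool)} (h : DetBy S B) (hST : S ⊆ T) :
    DetBy T B := fun ω ω' hh => h ω ω' (fun e he => hh e (hST he))

lemma DetBy.compl {S : Finset E} {B : Set (E → Bool)} (h : DetBy S B) : DetBy S Bᶜ :=
  fun ω ω' hh => not_congr (h ω ω' hh)

lemma DetBy.inter {S : Finset E} {B C : Set (E → Bool)} (h : DetBy S B) (h' : DetBy S C) :
    DetBy S (B ∩ C) := fun ω ω' hh => and_congr (h ω ω' hh) (h' ω ω' hh)

lemma DetBy.union {S : Finset E} {B C : Set (E → Bool)} (h : DetBy S B) (h' : DetBy S C) :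
    DetBy S (B ∪ C) := fun ω ω' hh => or_congr (h ω ω' hh) (h' ω ω' hh)

lemma DetBy.diff {S : Finset E} {B C : Set (E → Bool)} (h : DetBy S B) (h' : DetBy S C) :
    DetBy S (B \ C) := fun ω ω' hh => and_congr (h ω ω' hh) (not_congr (h' ω ω' hh))

lemma DetBy.iInter {ι : Sort*} {S : Finset E} {B : ι → Set (E → Bool)} (h : ∀ i, DetBy S (B i)) :
    DetBy S (⋂ i, B i) := fun ω ω' hh => by
  simp only [Set.mem_iInter]; exact forall_congr' (fun i => h i ω ω' hh)

lemma DetBy.iUnion {ι : Sort*} {S : Finset E} {B : ι → Set (E → Bool)} (h : ∀ i, DetBy S (B i)) :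
    DetBy S (⋃ i, B i) := fun ω ω' hh => by
  simp only [Set.mem_iUnion]; exact exists_congr (fun i => h i ω ω' hh)

/-- Extend a finite configuration by `false`. -/
noncomputable def ext0 (S : Finset E) (f : S → Bool) : E → Bool :=
  open Classical in fun e => if he : e ∈ S then f ⟨e, he⟩ else false

lemma ext0_mem {S : Finset E} (f : S → Bool) {e : E} (he : e ∈ S) : ext0 S f e = f ⟨e, he⟩ := by
  simp [ext0, he]

lemma ext0_mono {S : Finset E} : Monotone (ext0 S) := by
  intro f g hfg e
  by_cases he : e ∈ S
  · rw [ext0_mem f he, ext0_mem g he]; exact hfg _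
  · simp [ext0, he]

lemma DetBy.eq_preimage {S : Finset E} {B : Set (E → Bool)} (h : DetBy S B) :
    B = (fun (ω : E → Bool) (e : S) => ω e) ⁻¹' {f | ext0 S f ∈ B} := by
  ext ω
  simp only [Set.mem_preimage, Set.mem_setOf_eq]
  apply h
  intro e he
  rw [ext0_mem _ he]

lemma DetBy.meas {S : Finset E} {B : Set (E → Bool)} (h : DetBy S B) : MeasurableSet B := by
  rw [h.eq_preimage]
  exact (by fun_prop : Measurable (fun (ω : E → Bool) (e : S) => ω e)) (Set.Finite.measurableSet
    (Set.toFinite _))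

lemma Bern.indep {μ : Measure (E → Bool)} {p : ℝ} (h : Bern μ p) {S T : Finset E}
    (hST : Disjoint S T) {B C : Set (E → Bool)} (hB : DetBy S B) (hC : DetBy T C) :
    μ.real (B ∩ C) = μ.real B * μ.real C := by
  haveI := bw_prob h.h0 h.h1
  have h1 : ProbabilityTheory.iIndepFun (fun (i : E) (ω : E → Bool) => ω i) μ := by
    rw [h.eq_pi]
    exact ProbabilityTheory.iIndepFun_infinitePi (P := fun _ : E => bw p)
      (X := fun _ (b : Bool) => b) (fun _ => measurable_id)
  have h2 := h1.indepFun_finset S T hST (fun i => by fun_prop)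
  have h3 := h2.measure_inter_preimage_eq_mul {f | ext0 S f ∈ B} {f | ext0 T f ∈ C}
    (Set.Finite.measurableSet (Set.toFinite _)) (Set.Finite.measurableSet (Set.toFinite _))
  rw [← hB.eq_preimage, ← hC.eq_preimage] at h3
  simp [Measure.real, h3]

/-- weight of a finite configuration -/
noncomputable def wt (p : ℝ) {S : Finset E} (f : S → Bool) : ℝ :=
  ∏ e, (if f e then p else 1 - p)

open Classical in
lemma Bern.real_eq {μ : Measure (E → Bool)} {p : ℝ} (h : Bern μ p) {S : Finset E}
    {B : Set (E → Bool)} (hB : DetBy S B) :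
    μ.real B = ∑ f : S → Bool, wt p f * (if ext0 S f ∈ B then 1 else 0) := by
  haveI := bw_prob h.h0 h.h1
  haveI := h.prob
  have h1 : B = ⋃ f ∈ Finset.univ.filter (fun f : S → Bool => ext0 S f ∈ B),
      {ω : E → Bool | ∀ e ∈ S, ω e = ext0 S f e} := by
    ext ω
    simp only [Set.mem_iUnion, Finset.mem_filter, Finset.mem_univ, true_and, Set.mem_setOf_eq,
      exists_prop]
    constructor
    · intro hω
      refine ⟨fun e => ω e, ?_, fun e he => ?_⟩
      · refine (hB ω _ (fun e he => ?_)).1 hω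
        rw [ext0_mem _ he]
      · rw [ext0_mem _ he]
    · rintro ⟨f, hf, hω⟩
      exact (hB _ _ hω).2 hf
  have hm : ∀ f : S → Bool, MeasurableSet {ω : E → Bool | ∀ e ∈ S, ω e = ext0 S f e} := by
    intro f
    apply DetBy.meas (S := S)
    intro ω ω' hh
    simp only [Set.mem_setOf_eq]
    exact forall₂_congr (fun e he => by rw [hh e he])
  conv_lhs => rw [h1]
  rw [measureReal_biUnion_finset]
  · rw [Finset.sum_filter]
    refine Finset.sum_congr rfl (fun f _ => ?_)
    split_ifs with hf
    · rw [Measure.real, h.cyl, ENNReal.toReal_prod, mul_one, wt, ← Finset.prod_coe_sort S]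
      refine Finset.prod_congr rfl (fun e _ => ?_)
      rw [ext0_mem _ e.2]
      have := h.h0
      have := h.h1
      split_ifs
      · rw [ENNReal.toReal_ofReal h.h0]
      · rw [ENNReal.toReal_ofReal (by linarith)]
    · simp
  · intro f _ g _ hfg
    refine Set.disjoint_left.2 (fun ω h1 h2 => hfg ?_)
    funext e
    have a := h1 e e.2
    have b := h2 e e.2
    rw [ext0_mem _ e.2] at a b
    rw [← a, ← b]
  · intro f _; exact hm f

lemma wt_nonneg {p : ℝ} (h0 : 0 ≤ p) (h1 : p ≤ 1) {S : Finset E} (f : S → Bool) : 0 ≤ wt p f :=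
  Finset.prod_nonneg (fun e _ => by split_ifs <;> linarith)

lemma Bern.real_unique {μ ν : Measure (E → Bool)} {p : ℝ} (h : Bern μ p) (h' : Bern ν p)
    {S : Finset E} {B : Set (E → Bool)} (hB : DetBy S B) : μ.real B = ν.real B := by
  rw [h.real_eq hB, h'.real_eq hB]

lemma Bern.unique {μ ν : Measure (E → Bool)} {p : ℝ} (h : Bern μ p) (h' : Bern ν p) :
    μ = ν := by
  rw [h.eq_pi, h'.eq_pi]

/-- probability of an open set of edges -/
lemma Bern.all_open {μ : Measure (E → Bool)} {p : ℝ} (h : Bern μ p) (S : Finset E) :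
    μ.real {ω | ∀ e ∈ S, ω e = true} = p ^ S.card := by
  have := h.cyl S (fun _ => true)
  simp only [if_true, Finset.prod_const] at this
  rw [Measure.real, this, ENNReal.toReal_pow, ENNReal.toReal_ofReal h.h0]

/-- Continuity in the parameter. -/
lemma bern_continuity {p : ℝ} (hp : 0 < p) {μ : Measure (E → Bool)} (h : Bern μ p)
    {S : Finset E} {B : Set (E → Bool)} (hB : DetBy S B) {ε : ℝ} (hε : μ.real B < ε) :
    ∃ p' : ℝ, 0 ≤ p' ∧ p' < p ∧ ∃ ν : Measure (E → Bool), Bern ν p' ∧ ν.real B < ε := by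
  classical
  let F : ℝ → ℝ := fun q => ∑ f : S → Bool, wt q f * (if ext0 S f ∈ B then 1 else 0)
  have hF : Continuous F := by
    refine continuous_finset_sum _ (fun f _ => Continuous.mul ?_ continuous_const)
    refine continuous_finset_prod _ (fun e _ => ?_)
    split_ifs <;> fun_prop
  have h1 : ∀ᶠ q in nhds p, F q < ε := by
    refine hF.continuousAt.eventually_lt continuousAt_const ?_
    have := h.real_eq hB
    exact (this ▸ hε : _)
  obtain ⟨r, hr, hr'⟩ := Metric.eventually_nhds_iff.1 h1
  refine ⟨max 0 (p - r/2), le_max_left _ _, max_lt hp (by linarith), ?_⟩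
  obtain ⟨ν, hν⟩ := bern_infinitePi (E := E) (p := max 0 (p - r/2)) (le_max_left _ _)
    (max_le (by norm_num) (by linarith [h.h1]))
  refine ⟨ν, hν, ?_⟩
  rw [hν.real_eq hB]
  apply hr'
  rw [Real.dist_eq, abs_lt]
  constructor
  · have := le_max_right 0 (p - r/2)
    linarith
  · have : max 0 (p - r/2) ≤ p := max_le hp.le (by linarith)
    linarith

/-- Increasing events -/
def Incr (B : Set (E → Bool)) : Prop := ∀ ω ω' : E → Bool, ω ≤ ω' → ω ∈ B → ω' ∈ B

lemma Incr.inter {B C : Set (E → Bool)} (h : Incr B) (h' : Incr C) : Incr (B ∩ C) :=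
  fun ω ω' hh hx => ⟨h ω ω' hh hx.1, h' ω ω' hh hx.2⟩

lemma Incr.union {B C : Set (E → Bool)} (h : Incr B) (h' : Incr C) : Incr (B ∪ C) :=
  fun ω ω' hh hx => hx.imp (h ω ω' hh) (h' ω ω' hh)

lemma Bern.harris {μ : Measure (E → Bool)} {p : ℝ} (h : Bern μ p) {S : Finset E}
    {B C : Set (E → Bool)} (hB : DetBy S B) (hC : DetBy S C) (iB : Incr B) (iC : Incr C) :
    μ.real B * μ.real C ≤ μ.real (B ∩ C) := by
  classical
  haveI := h.prob
  have key := fkg (α := S → Bool) (β := ℝ) (μ := fun f => wt p f)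
    (f := fun f => if ext0 S f ∈ B then 1 else 0) (g := fun f => if ext0 S f ∈ C then 1 else 0)
    (fun f => wt_nonneg h.h0 h.h1 f) (fun f => by dsimp; split_ifs <;> norm_num)
    (fun f => by dsimp; split_ifs <;> norm_num)
    (fun f g hfg => by
      by_cases hf : ext0 S f ∈ B
      · have := iB _ _ (ext0_mono hfg) hf
        simp [hf, this]
      · simp only [hf, if_false]; split_ifs <;> norm_num)
    (fun f g hfg => by
      by_cases hf : ext0 S f ∈ C
      · have := iC _ _ (ext0_mono hfg) hf
        simp [hf, this]
      · simp only [hf, if_false]; split_ifs <;> norm_num)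
    (fun a b => by
      simp only [wt]
      rw [← Finset.prod_mul_distrib, ← Finset.prod_mul_distrib]
      apply le_of_eq
      refine Finset.prod_congr rfl (fun e _ => ?_)
      simp only [Pi.inf_apply, Pi.sup_apply]
      rcases Bool.eq_false_or_eq_true (a e) with h1 | h1 <;>
        rcases Bool.eq_false_or_eq_true (b e) with h2 | h2 <;> simp [h1, h2, mul_comm])
  have e1 : ∑ f : S → Bool, wt p f = 1 := by
    have := h.real_eq (S := S) (B := Set.univ) (fun _ _ _ => by simp)
    simpa using this.symm
  rw [h.real_eq hB, h.real_eq hC, h.real_eq (hB.inter hC)]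
  rw [e1, one_mul] at key
  refine key.trans (le_of_eq ?_)
  refine Finset.sum_congr rfl (fun f _ => ?_)
  by_cases h1 : ext0 S f ∈ B <;> by_cases h2 : ext0 S f ∈ C <;> simp [h1, h2]

/-- Harris for decreasing events (complements). -/
lemma Bern.harris_compl {μ : Measure (E → Bool)} {p : ℝ} (h : Bern μ p) {S : Finset E}
    {B C : Set (E → Bool)} (hB : DetBy S B) (hC : DetBy S C) (iB : Incr B) (iC : Incr C) :
    μ.real Bᶜ * μ.real Cᶜ ≤ μ.real (B ∪ C)ᶜ := by
  haveI := h.prob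
  have h1 := h.harris hB hC iB iC
  rw [measureReal_compl hB.meas, measureReal_compl hC.meas, measureReal_compl (hB.union hC).meas]
  have h2 := measureReal_union_add_inter (μ := μ) (s := B) hC.meas
  simp only [probReal_univ]
  nlinarith

/-- square-root trick -/
lemma Bern.sqrt_trick {μ : Measure (E → Bool)} {p : ℝ} (h : Bern μ p) {S : Finset E}
    {ι : Type*} (I : Finset ι) (B : ι → Set (E → Bool)) (hB : ∀ i, DetBy S (B i))
    (iB : ∀ i, Incr (B i)) :
    ∏ i ∈ I, μ.real (B i)ᶜ ≤ μ.real (⋃ i ∈ I, B i)ᶜ := by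
  classical
  haveI := h.prob
  induction I using Finset.induction_on with
  | empty => simp
  | insert a I ha ih =>
    rw [Finset.prod_insert ha, Finset.set_biUnion_insert]
    refine le_trans (mul_le_mul_of_nonneg_left ih measureReal_nonneg) ?_
    apply h.harris_compl (hB a) (DetBy.iUnion (fun i => DetBy.iUnion (fun _ => hB i))) (iB a)
    intro ω ω' hh
    simp only [Set.mem_iUnion]
    rintro ⟨i, hi, hx⟩
    exact ⟨i, hi, iB i _ _ hh hx⟩

/-- Invariance under an injection of the index set. -/
lemma Bern.map {μ : Measure (E → Bool)} {p : ℝ} (h : Bern μ p) (φ : E → E)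
    (hφ : Function.Injective φ) : Bern (μ.map (fun ω e => ω (φ e))) p := by
  classical
  haveI := h.prob
  have hm : Measurable (fun (ω : E → Bool) (e : E) => ω (φ e)) := by fun_prop
  refine ⟨h.h0, h.h1, Measure.isProbabilityMeasure_map hm.aemeasurable, fun S f => ?_⟩
  have hd : DetBy S {ω : E → Bool | ∀ e ∈ S, ω e = f e} := by
    intro ω ω' hh
    simp only [Set.mem_setOf_eq]
    exact forall₂_congr (fun e he => by rw [hh e he])
  rw [Measure.map_apply hm hd.meas]
  by_cases hE : Nonempty E
  · have := h.cyl (S.image φ) (fun e => f (Function.invFun φ e))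
    rw [Finset.prod_image (fun a _ b _ hab => hφ hab)] at this
    simp only [Function.leftInverse_invFun hφ _] at this
    rw [← this]
    congr 1
    ext ω
    simp [Function.leftInverse_invFun hφ _]
  · have : S = ∅ := by
      ext x; exact absurd ⟨x⟩ hE
    subst this
    simp

lemma Bern.real_preimage {μ : Measure (E → Bool)} {p : ℝ} (h : Bern μ p) (φ : E → E)
    (hφ : Function.Injective φ) {B : Set (E → Bool)} (hB : MeasurableSet B) :
    μ.real {ω | (fun e => ω (φ e)) ∈ B} = μ.real B := by
  have hm : Measurable (fun (ω : E → Bool) (e : E) => ω (φ e)) := by fun_prop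
  have := (h.map φ hφ).unique h
  conv_rhs => rw [← this, Measure.real, Measure.map_apply hm hB]
  rfl

/-- Counting Markov inequality. -/
lemma countMarkov {Ω : Type*} [MeasurableSpace Ω] (μ : Measure Ω) [IsProbabilityMeasure μ]
    {ι : Type*} (I : Finset ι) (B : ι → Set Ω) (hB : ∀ i, MeasurableSet (B i)) (W : Set Ω)
    (hW : MeasurableSet W) (T : ℝ)
    (h : ∀ ω ∈ W, T ≤ ∑ i ∈ I, (B i).indicator (fun _ => (1 : ℝ)) ω) :
    T * μ.real W ≤ ∑ i ∈ I, μ.real (B i) := by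
  have h1 : ∫ ω, W.indicator (fun _ => T) ω ∂μ ≤
      ∫ ω, ∑ i ∈ I, (B i).indicator (fun _ => (1 : ℝ)) ω ∂μ := by
    apply integral_mono
    · exact (integrable_const T).indicator hW
    · exact integrable_finset_sum _ (fun i _ => (integrable_const 1).indicator (hB i))
    · intro ω
      by_cases hω : ω ∈ W
      · simp only [Set.indicator_of_mem hω]; exact h ω hω
      · simp only [Set.indicator_of_notMem hω]
        exact Finset.sum_nonneg (fun i _ => Set.indicator_nonneg (fun _ _ => zero_le_one) _)
  rw [integral_indicator_const _ hW, integral_finset_sum _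
    (fun i _ => (integrable_const 1).indicator (hB i))] at h1
  simp only [integral_indicator_const _ (hB _), smul_eq_mul, mul_one] at h1
  linarith

end Local


/-! ### Part 2: the pivotality estimate -/

section Pivotal

variable {E : Type*}

/-- Open all edges in `S`. -/
noncomputable def opn (S : Finset E) (ω : E → Bool) : E → Bool :=
  open Classical in fun e => if e ∈ S then true else ω e

lemma opn_mem {S : Finset E} {ω : E → Bool} {e : E} (he : e ∈ S) : opn S ω e = true := by
  simp [opn, he]

lemma opn_notMem {S : Finset E} {ω : E → Bool} {e : E} (he : e ∉ S) : opn S ω e = ω e := by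
  simp [opn, he]

lemma le_opn (S : Finset E) (ω : E → Bool) : ω ≤ opn S ω := by
  intro e
  by_cases he : e ∈ S
  · rw [opn_mem he]; exact Bool.le_true _
  · rw [opn_notMem he]

lemma cov_aux {Ω : Type*} [MeasurableSpace Ω] (μ : Measure Ω) [IsProbabilityMeasure μ]
    {A B : Set Ω} (hA : MeasurableSet A) (hB : MeasurableSet B) :
    ∫ ω, (A.indicator (fun _ => (1:ℝ)) ω - μ.real A) * (B.indicator (fun _ => (1:ℝ)) ω - μ.real B)
      ∂μ = μ.real (A ∩ B) - μ.real A * μ.real B := by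
  have e : ∀ ω, (A.indicator (fun _ => (1:ℝ)) ω - μ.real A) *
      (B.indicator (fun _ => (1:ℝ)) ω - μ.real B) =
      ((A ∩ B).indicator (fun _ => (1:ℝ)) ω - A.indicator (fun _ => μ.real B) ω) -
        (B.indicator (fun _ => μ.real A) ω - μ.real A * μ.real B) := by
    intro ω
    by_cases h1 : ω ∈ A <;> by_cases h2 : ω ∈ B <;> simp [h1, h2] <;> ring
  simp_rw [e]
  have i1 := (integrable_const (μ := μ) (1:ℝ)).indicator (hA.inter hB)
  have i2 := (integrable_const (μ := μ) (μ.real B)).indicator hA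
  have i3 := (integrable_const (μ := μ) (μ.real A)).indicator hB
  have j1 : Integrable (fun ω => (A ∩ B).indicator (fun _ => (1:ℝ)) ω -
    A.indicator (fun _ => μ.real B) ω) μ := i1.sub i2
  have j2 : Integrable (fun ω => B.indicator (fun _ => μ.real A) ω - μ.real A * μ.real B) μ :=
    i3.sub (integrable_const _)
  rw [integral_sub j1 j2, integral_sub i1 i2,
    integral_sub i3 (integrable_const _), integral_indicator_const _ (hA.inter hB),
    integral_indicator_const _ hA, integral_indicator_const _ hB]
  simp only [smul_eq_mul, integral_const, probReal_univ]
  ring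

lemma Bern.pivotal {μ : Measure (E → Bool)} {p : ℝ} (h : Bern μ p) {ι : Type*} (I : Finset ι)
    (S : ι → Finset E) (hS : ∀ a ∈ I, ∀ b ∈ I, a ≠ b → Disjoint (S a) (S b)) {T : Finset E}
    {F : Set (E → Bool)} (hF : DetBy T F) (iF : Incr F) {q : ℝ} (hq : 0 < q)
    (hqS : ∀ a ∈ I, q ≤ p ^ (S a).card) :
    ∑ a ∈ I, μ.real ({ω | opn (S a) ω ∈ F} \ F) ≤ √(I.card) / q := by
  classical
  haveI := h.prob
  by_cases hI : I.card = 0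
  · rw [Finset.card_eq_zero] at hI; subst hI; simp
  set O : ι → Set (E → Bool) := fun a => {ω | ∀ e ∈ S a, ω e = true} with hO
  have dO : ∀ a, DetBy (S a) (O a) := by
    intro a ω ω' hh
    simp only [hO, Set.mem_setOf_eq]
    exact forall₂_congr (fun e he => by rw [hh e he])
  have mO : ∀ a, MeasurableSet (O a) := fun a => (dO a).meas
  have qO : ∀ a, μ.real (O a) = p ^ (S a).card := fun a => h.all_open (S a)
  have mF := hF.meas
  have dFa : ∀ a, DetBy (T \ S a) {ω | opn (S a) ω ∈ F} := by
    intro a ω ω' hh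
    apply hF
    intro e he
    by_cases h1 : e ∈ S a
    · rw [opn_mem h1, opn_mem h1]
    · rw [opn_notMem h1, opn_notMem h1]; exact hh e (by simp [he, h1])
  have key1 : ∀ a, μ.real ({ω | opn (S a) ω ∈ F} \ F) * μ.real (O a) =
      ∫ ω in F, ((O a).indicator (fun _ => (1:ℝ)) ω - μ.real (O a)) ∂μ := by
    intro a
    have e1 : F ∩ O a = {ω | opn (S a) ω ∈ F} ∩ O a := by
      ext ω
      simp only [Set.mem_inter_iff, Set.mem_setOf_eq]
      refine and_congr_left (fun hω => ?_)
      have : opn (S a) ω = ω := by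
        funext e
        by_cases h1 : e ∈ S a
        · rw [opn_mem h1, hω e h1]
        · rw [opn_notMem h1]
      rw [this]
    have e2 : μ.real (F ∩ O a) = μ.real {ω | opn (S a) ω ∈ F} * μ.real (O a) := by
      rw [e1]
      exact h.indep Finset.sdiff_disjoint (dFa a) (dO a)
    have e3 : F ⊆ {ω | opn (S a) ω ∈ F} := fun ω hω => iF _ _ (le_opn _ _) hω
    rw [integral_sub ((integrable_const (1:ℝ)).indicator (mO a)) (integrable_const _),
      integral_indicator_const _ (mO a), measureReal_restrict_apply (mO a), Set.inter_comm, e2,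
      measureReal_diff e3 mF]
    simp only [integral_const, smul_eq_mul, mul_one, measureReal_restrict_apply_univ]
    ring
  set X : (E → Bool) → ℝ := fun ω => ∑ a ∈ I, ((O a).indicator (fun _ => (1:ℝ)) ω - μ.real (O a))
    with hX
  have iY : ∀ a, Integrable (fun ω => (O a).indicator (fun _ => (1:ℝ)) ω - μ.real (O a)) μ :=
    fun a => ((integrable_const (1:ℝ)).indicator (mO a)).sub (integrable_const _)
  have bY : ∀ a ω, ‖(O a).indicator (fun _ => (1:ℝ)) ω - μ.real (O a)‖ ≤ 1 := by
    intro a ω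
    have h1 := measureReal_nonneg (μ := μ) (s := O a)
    have h2 := measureReal_le_one (μ := μ) (s := O a)
    rw [Real.norm_eq_abs, abs_le]
    by_cases hω : ω ∈ O a <;> simp [hω] <;> linarith
  have iYY : ∀ a b, Integrable (fun ω => ((O a).indicator (fun _ => (1:ℝ)) ω - μ.real (O a)) *
      ((O b).indicator (fun _ => (1:ℝ)) ω - μ.real (O b))) μ := by
    intro a b
    exact (iY b).bdd_mul (c := 1) (iY a).aestronglyMeasurable (Eventually.of_forall (bY a))
  have hX2e : ∀ ω, X ω ^ 2 = ∑ a ∈ I, ∑ b ∈ I,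
      ((O a).indicator (fun _ => (1:ℝ)) ω - μ.real (O a)) *
      ((O b).indicator (fun _ => (1:ℝ)) ω - μ.real (O b)) := by
    intro ω
    rw [sq, hX, Finset.sum_mul_sum]
  have iX2 : Integrable (fun ω => X ω ^ 2) μ := by
    simp_rw [hX2e]
    exact integrable_finset_sum _ (fun a _ => integrable_finset_sum _ (fun b _ => iYY a b))
  have iX : Integrable X μ := integrable_finset_sum _ (fun a _ => iY a)
  have hX2 : ∫ ω, X ω ^ 2 ∂μ ≤ I.card := by
    simp_rw [hX2e]
    rw [integral_finset_sum _ (fun a _ => integrable_finset_sum _ (fun b _ => iYY a b))]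
    have : ∀ a ∈ I, ∫ ω, ∑ b ∈ I,
      ((O a).indicator (fun _ => (1:ℝ)) ω - μ.real (O a)) *
      ((O b).indicator (fun _ => (1:ℝ)) ω - μ.real (O b)) ∂μ ≤ 1 := by
      intro a ha
      rw [integral_finset_sum _ (fun b _ => iYY a b), Finset.sum_eq_single_of_mem a ha]
      · rw [cov_aux μ (mO a) (mO a), Set.inter_self]
        have h1 := measureReal_nonneg (μ := μ) (s := O a)
        have h2 := measureReal_le_one (μ := μ) (s := O a)
        nlinarith
      · intro b hb hab
        rw [cov_aux μ (mO a) (mO b), h.indep (hS a ha b hb hab.symm) (dO a) (dO b)]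
        ring
    calc _ ≤ ∑ a ∈ I, (1:ℝ) := Finset.sum_le_sum this
      _ = I.card := by simp
  have hN : (0:ℝ) < I.card := by exact_mod_cast Nat.pos_of_ne_zero hI
  have hs : 0 < √(I.card : ℝ) := Real.sqrt_pos.2 hN
  have key2 : ∫ ω in F, X ω ∂μ ≤ √(I.card) := by
    have a1 : ∫ ω in F, X ω ∂μ ≤ ∫ ω in F, (X ω ^ 2 / √(I.card) + √(I.card)) / 2 ∂μ := by
      apply integral_mono iX.integrableOn
      · exact (((iX2.div_const _).add (integrable_const _)).div_const _).integrableOn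
      · intro ω
        show X ω ≤ (X ω ^ 2 / √(I.card) + √(I.card)) / 2
        rw [div_add' _ _ _ hs.ne', div_div, le_div_iff₀ (by positivity)]
        nlinarith [sq_nonneg (X ω - √(I.card))]
    have a2 : ∫ ω in F, (X ω ^ 2 / √(I.card) + √(I.card)) / 2 ∂μ ≤
        ∫ ω, (X ω ^ 2 / √(I.card) + √(I.card)) / 2 ∂μ := by
      apply setIntegral_le_integral
      · exact ((iX2.div_const _).add (integrable_const _)).div_const _
      · refine Eventually.of_forall (fun ω => ?_)
        show (0:ℝ) ≤ (X ω ^ 2 / √(I.card) + √(I.card)) / 2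
        positivity
    have a3 : ∫ ω, (X ω ^ 2 / √(I.card) + √(I.card)) / 2 ∂μ ≤ √(I.card) := by
      rw [integral_div, integral_add (iX2.div_const _) (integrable_const _), integral_div]
      simp only [integral_const, probReal_univ, smul_eq_mul, one_mul]
      have : (∫ ω, X ω ^ 2 ∂μ) / √(I.card) ≤ √(I.card) := by
        rw [div_le_iff₀ hs, Real.mul_self_sqrt hN.le]; exact hX2
      linarith
    linarith
  have key3 : ∫ ω in F, X ω ∂μ = ∑ a ∈ I, μ.real ({ω | opn (S a) ω ∈ F} \ F) * μ.real (O a) := by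
    rw [hX, integral_finset_sum _ (fun a _ => (iY a).integrableOn)]
    exact Finset.sum_congr rfl (fun a _ => (key1 a).symm)
  rw [le_div_iff₀ hq, Finset.sum_mul]
  refine le_trans (Finset.sum_le_sum (fun a ha => ?_)) (key3 ▸ key2)
  exact mul_le_mul_of_nonneg_left ((hqS a ha).trans (qO a).ge) measureReal_nonneg

end Pivotal


/-! ### Part 3: connections inside finite domains -/

section Conn

variable {d : ℕ}

lemma rtg_lift {α β : Type*} {r : α → α → Prop} {s : β → β → Prop} (f : α → β)
    (h : ∀ a b, r a b → s (f a) (f b)) {a b : α} (hab : Relation.ReflTransGen r a b) :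
    Relation.ReflTransGen s (f a) (f b) := by
  induction hab with
  | refl => exact Relation.ReflTransGen.refl
  | tail _ h2 ih => exact ih.tail (h _ _ h2)

lemma rtg_mono {α : Type*} {r s : α → α → Prop}
    (h : ∀ a b, r a b → s a b) {a b : α} (hab : Relation.ReflTransGen r a b) :
    Relation.ReflTransGen s a b := rtg_lift id h hab

lemma rtg_symm {α : Type*} {r : α → α → Prop}
    (h : ∀ a b, r a b → r b a) {a b : α} (hab : Relation.ReflTransGen r a b) :
    Relation.ReflTransGen r b a := by
  induction hab with
  | refl => exact Relation.ReflTransGen.refl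
  | tail _ h2 ih => exact Relation.ReflTransGen.head (h _ _ h2) ih

lemma adjV_symm {x y : Vtx d} (h : adjV x y) : adjV y x := by
  unfold adjV at *
  rw [← h]
  exact Finset.sum_congr rfl (fun i _ => abs_sub_comm _ _)

lemma adjV_abs_le {x y : Vtx d} (h : adjV x y) (j : Fin d) : |x j - y j| ≤ 1 := by
  unfold adjV at h
  rw [← h]
  exact Finset.single_le_sum (f := fun i => |x i - y i|) (fun i _ => abs_nonneg _)
    (Finset.mem_univ j)

lemma openAdj_symm {ω : Config d} {x y : Vtx d} (h : openAdj ω x y) : openAdj ω y x :=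
  ⟨adjV_symm h.1, by rw [Sym2.eq_swap]; exact h.2⟩

lemma openAdj_mono {ω ω' : Config d} (hω : ω ≤ ω') {x y : Vtx d} (h : openAdj ω x y) :
    openAdj ω' x y := by
  refine ⟨h.1, ?_⟩
  have := hω s(x, y)
  rw [h.2] at this
  exact Bool.eq_true_of_true_le this

/-- `x` and `y` are connected by an open path inside `D`. -/
def Conn (ω : Config d) (D : Finset (Vtx d)) (x y : Vtx d) : Prop :=
  Relation.ReflTransGen (fun a b => a ∈ D ∧ b ∈ D ∧ openAdj ω a b) x y

lemma Conn.refl (ω : Config d) (D : Finset (Vtx d)) (x : Vtx d) : Conn ω D x x :=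
  Relation.ReflTransGen.refl

lemma Conn.trans {ω : Config d} {D : Finset (Vtx d)} {x y z : Vtx d} (h : Conn ω D x y)
    (h' : Conn ω D y z) : Conn ω D x z := Relation.ReflTransGen.trans h h'

lemma Conn.symm {ω : Config d} {D : Finset (Vtx d)} {x y : Vtx d} (h : Conn ω D x y) :
    Conn ω D y x := by
  unfold Conn at *
  refine rtg_symm ?_ h
  intro a b hab
  exact ⟨hab.2.1, hab.1, openAdj_symm hab.2.2⟩

lemma Conn.mono {ω ω' : Config d} {D D' : Finset (Vtx d)} (hω : ω ≤ ω') (hD : D ⊆ D')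
    {x y : Vtx d} (h : Conn ω D x y) : Conn ω' D' x y :=
  rtg_mono (fun _ _ hab => ⟨hD hab.1, hD hab.2.1, openAdj_mono hω hab.2.2⟩) h

lemma Conn.monoD {ω : Config d} {D D' : Finset (Vtx d)} (hD : D ⊆ D')
    {x y : Vtx d} (h : Conn ω D x y) : Conn ω D' x y := h.mono le_rfl hD

lemma Conn.mem {ω : Config d} {D : Finset (Vtx d)} {x y : Vtx d} (h : Conn ω D x y) (hx : x ∈ D) :
    y ∈ D := by
  unfold Conn at h
  induction h with
  | refl => exact hx
  | tail _ h2 _ => exact h2.2.1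

lemma Conn.global {ω : Config d} {D : Finset (Vtx d)} {x y : Vtx d} (h : Conn ω D x y) :
    Relation.ReflTransGen (openAdj ω) x y :=
  rtg_mono (fun _ _ hab => hab.2.2) h

lemma Conn.congr {ω ω' : Config d} {D : Finset (Vtx d)} (h : ∀ e ∈ D.sym2, ω e = ω' e)
    (x y : Vtx d) : Conn ω D x y ↔ Conn ω' D x y := by
  have : (fun a b => a ∈ D ∧ b ∈ D ∧ openAdj ω a b) =
      (fun a b => a ∈ D ∧ b ∈ D ∧ openAdj ω' a b) := by
    funext a b
    by_cases ha : a ∈ D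
    · by_cases hb : b ∈ D
      · have := h s(a, b) (by rw [Finset.mk_mem_sym2_iff]; exact ⟨ha, hb⟩)
        simp [ha, hb, openAdj, this]
      · simp [hb]
    · simp [ha]
  unfold Conn
  rw [this]

/-- The open cluster of `x` inside `D`. -/
noncomputable def Cl (ω : Config d) (D : Finset (Vtx d)) (x : Vtx d) : Finset (Vtx d) :=
  open Classical in D.filter (fun y => Conn ω D x y)

lemma mem_Cl {ω : Config d} {D : Finset (Vtx d)} {x y : Vtx d} :
    y ∈ Cl ω D x ↔ y ∈ D ∧ Conn ω D x y := by
  simp [Cl]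

lemma Cl_mono {ω ω' : Config d} {D D' : Finset (Vtx d)} (hω : ω ≤ ω') (hD : D ⊆ D') (x : Vtx d) :
    Cl ω D x ⊆ Cl ω' D' x := by
  intro y hy
  rw [mem_Cl] at *
  exact ⟨hD hy.1, hy.2.mono hω hD⟩

lemma Cl_congr {ω ω' : Config d} {D : Finset (Vtx d)} (h : ∀ e ∈ D.sym2, ω e = ω' e)
    (x : Vtx d) : Cl ω D x = Cl ω' D x := by
  ext y
  rw [mem_Cl, mem_Cl, Conn.congr h]

lemma Cl_eq_of_conn {ω : Config d} {D : Finset (Vtx d)} {x y : Vtx d} (h : Conn ω D x y) :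
    Cl ω D x = Cl ω D y := by
  ext z
  rw [mem_Cl, mem_Cl]
  exact and_congr_right (fun _ => ⟨fun h' => h.symm.trans h', fun h' => h.trans h'⟩)

/-- Transport by a graph automorphism. -/
lemma Conn.map (φ : Vtx d ≃ Vtx d) (hφ : ∀ x y, adjV (φ x) (φ y) ↔ adjV x y) (ω : Config d)
    (D : Finset (Vtx d)) (x y : Vtx d) :
    Conn (fun e => ω (Sym2.map φ e)) D x y ↔ Conn ω (D.map φ.toEmbedding) (φ x) (φ y) := by
  constructor
  · intro h
    unfold Conn at *
    refine rtg_lift φ (fun a b hab => ?_) h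
    refine ⟨by simpa using hab.1, by simpa using hab.2.1, (hφ _ _).2 hab.2.2.1, ?_⟩
    simpa using hab.2.2.2
  · intro h
    unfold Conn at *
    have := rtg_lift (s := (fun a b => a ∈ D ∧ b ∈ D ∧
      openAdj (fun e => ω (Sym2.map φ e)) a b)) φ.symm (fun a b hab => ?_) h
    · simpa using this
    · refine ⟨?_, ?_, (hφ _ _).1 ?_, ?_⟩
      · obtain ⟨a', ha', rfl⟩ := Finset.mem_map.1 hab.1; simpa using ha'
      · obtain ⟨b', hb', rfl⟩ := Finset.mem_map.1 hab.2.1; simpa using hb'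
      · simpa using hab.2.2.1
      · simpa using hab.2.2.2

lemma sym2map_inj (φ : Vtx d ≃ Vtx d) : Function.Injective (Sym2.map φ) :=
  Sym2.map.injective φ.injective

/-- Boxes. -/
noncomputable def Box (x : Vtx d) (N : ℕ) : Finset (Vtx d) := Finset.Icc (fun j => x j - N) (fun j => x j + N)

lemma mem_Box {x y : Vtx d} {N : ℕ} : y ∈ Box x N ↔ ∀ j, |y j - x j| ≤ N := by
  rw [Box, Finset.mem_Icc, Pi.le_def, Pi.le_def, ← forall_and]
  refine forall_congr' (fun j => ?_)
  rw [abs_le]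
  constructor <;> intro h <;> constructor <;> linarith [h.1, h.2]

lemma card_Box (x : Vtx d) (N : ℕ) : (Box x N).card = (2 * N + 1) ^ d := by
  rw [Box, Pi.card_Icc]
  simp only [Int.card_Icc]
  have : ∀ j : Fin d, (x j + N + 1 - (x j - N)).toNat = 2 * N + 1 := by intro j; omega
  simp [this]

lemma self_mem_Box (x : Vtx d) (N : ℕ) : x ∈ Box x N := by
  rw [mem_Box]; intro j; simp

lemma Box_mono (x : Vtx d) {N M : ℕ} (h : N ≤ M) : Box x N ⊆ Box x M := by
  intro y hy
  rw [mem_Box] at *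
  intro j
  exact (hy j).trans (by exact_mod_cast h)

lemma Box_sub {x y : Vtx d} {N M K : ℕ} (h : y ∈ Box x M) (hK : N + M ≤ K) :
    Box y N ⊆ Box x K := by
  intro z hz
  rw [mem_Box] at *
  intro j
  have h1 := abs_le.1 (h j)
  have h2 := abs_le.1 (hz j)
  have : (N : ℤ) + M ≤ K := by exact_mod_cast hK
  rw [abs_le]
  constructor <;> linarith [h1.1, h1.2, h2.1, h2.2]

lemma adj_mem_Box {x y : Vtx d} (h : adjV x y) : y ∈ Box x 1 := by
  rw [mem_Box]
  intro j
  rw [abs_sub_comm]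
  simpa using adjV_abs_le h j

/-- Translations. -/
def trE (a : Vtx d) : Vtx d ≃ Vtx d := Equiv.addRight a

lemma trE_apply (a x : Vtx d) : trE a x = x + a := rfl

lemma trE_adj (a x y : Vtx d) : adjV (trE a x) (trE a y) ↔ adjV x y := by
  simp [adjV, trE_apply]

lemma Box_map_tr (a x : Vtx d) (N : ℕ) : (Box x N).map (trE a).toEmbedding = Box (x + a) N := by
  ext y
  simp only [Finset.mem_map_equiv, mem_Box]
  refine forall_congr' (fun j => ?_)
  have : (trE a).symm y j = y j - a j := by simp [trE, sub_eq_add_neg]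
  rw [this, Pi.add_apply]
  ring_nf

/-- Signed permutations. -/
def sgE (t : Fin d → ℤˣ) (σ : Equiv.Perm (Fin d)) : Vtx d ≃ Vtx d where
  toFun x := fun j => t j * x (σ j)
  invFun y := fun j => t (σ.symm j) * y (σ.symm j)
  left_inv x := by
    funext j
    have : ((t (σ.symm j) : ℤˣ) : ℤ) * (t (σ.symm j) : ℤˣ) = 1 := by
      rw [← Units.val_mul, Int.units_mul_self]; rfl
    simp [← mul_assoc, this]
  right_inv y := by
    funext j
    have : ((t j : ℤˣ) : ℤ) * (t j : ℤˣ) = 1 := by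
      rw [← Units.val_mul, Int.units_mul_self]; rfl
    simp [← mul_assoc, this]

lemma sgE_apply (t : Fin d → ℤˣ) (σ : Equiv.Perm (Fin d)) (x : Vtx d) (j : Fin d) :
    sgE t σ x j = t j * x (σ j) := rfl

lemma abs_units_mul (u : ℤˣ) (x : ℤ) : |(u : ℤ) * x| = |x| := by
  rcases Int.units_eq_one_or u with h | h <;> simp [h]

lemma sgE_adj (t : Fin d → ℤˣ) (σ : Equiv.Perm (Fin d)) (x y : Vtx d) :
    adjV (sgE t σ x) (sgE t σ y) ↔ adjV x y := by
  simp only [adjV, sgE_apply, ← mul_sub, abs_units_mul]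
  rw [Equiv.sum_comp σ (fun j => |x j - y j|)]

lemma sgE_mem_Box (t : Fin d → ℤˣ) (σ : Equiv.Perm (Fin d)) (x : Vtx d) (N : ℕ) :
    sgE t σ x ∈ Box (0 : Vtx d) N ↔ x ∈ Box (0 : Vtx d) N := by
  simp only [mem_Box, Pi.zero_apply, sub_zero, sgE_apply, abs_units_mul]
  exact ⟨fun h j => by simpa using h (σ.symm j), fun h j => h (σ j)⟩

lemma Box_map_sg (t : Fin d → ℤˣ) (σ : Equiv.Perm (Fin d)) (N : ℕ) :
    (Box (0 : Vtx d) N).map (sgE t σ).toEmbedding = Box 0 N := by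
  ext y
  rw [Finset.mem_map_equiv, ← sgE_mem_Box t σ, Equiv.apply_symm_apply]

lemma Cl_map (φ : Vtx d ≃ Vtx d) (hφ : ∀ x y, adjV (φ x) (φ y) ↔ adjV x y) (ω : Config d)
    (D : Finset (Vtx d)) (x : Vtx d) :
    (Cl (fun e => ω (Sym2.map φ e)) D x).map φ.toEmbedding =
      Cl ω (D.map φ.toEmbedding) (φ x) := by
  ext y
  rw [Finset.mem_map_equiv, mem_Cl, mem_Cl, Conn.map φ hφ, Finset.mem_map_equiv,
    Equiv.apply_symm_apply]

end Conn


/-! ### Part 4: volume growth from anchored isoperimetry -/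

section Growth

variable {d : ℕ}

lemma profile_le {ω : Config d} {c : ℝ} {n : ℕ} (h : c ≤ n * anchoredProfile ω n)
    {H : Finset (Vtx d)} (h0 : 0 ∈ H)
    (hc : ∀ x ∈ H, Relation.ReflTransGen (fun a b => a ∈ H ∧ b ∈ H ∧ openAdj ω a b) 0 x)
    (hn : H.card ≤ n ^ d) : c * H.card ≤ n * openBoundaryCard ω H := by
  have hpos : 0 < H.card := Finset.card_pos.2 ⟨0, h0⟩
  have h1 : anchoredProfile ω n ≤ (openBoundaryCard ω H : ℝ) / H.card := by
    apply csInf_le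
    · refine ⟨0, ?_⟩
      rintro r ⟨H', _, _, _, _, _, rfl⟩
      positivity
    · refine ⟨H, h0, ?_, hc, hpos, hn, rfl⟩
      intro x hx
      exact rtg_mono (fun _ _ hab => hab.2.2) (hc x hx)
  have hp : (0:ℝ) < H.card := by exact_mod_cast hpos
  have h2 : c ≤ n * ((openBoundaryCard ω H : ℝ) / H.card) :=
    h.trans (mul_le_mul_of_nonneg_left h1 (Nat.cast_nonneg n))
  rw [← mul_div_assoc, le_div_iff₀ hp] at h2
  exact h2

lemma Cl_conn {ω : Config d} {D : Finset (Vtx d)} {x y : Vtx d} (hx : x ∈ D)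
    (h : Conn ω D x y) : Conn ω (Cl ω D x) x y := by
  have : ∀ z, Conn ω D x z → Conn ω (Cl ω D x) x z := by
    intro z hz
    unfold Conn at hz
    induction hz with
    | refl => exact Conn.refl _ _ _
    | tail h1 h2 ih =>
      refine Relation.ReflTransGen.tail ih ⟨?_, ?_, h2.2.2⟩
      · exact mem_Cl.2 ⟨h2.1, h1⟩
      · exact mem_Cl.2 ⟨h2.2.1, Relation.ReflTransGen.tail h1 h2⟩
  exact this y h

lemma boundary_le (ω : Config d) (k : ℕ) :
    openBoundaryCard ω (Cl ω (Box 0 k) 0) ≤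
      3 ^ d * (Cl ω (Box 0 (k+1)) 0 \ Cl ω (Box 0 k) 0).card := by
  classical
  set H := Cl ω (Box 0 k) 0
  set H' := Cl ω (Box 0 (k+1)) 0
  have hsub : {p : Vtx d × Vtx d | p.1 ∈ H ∧ p.2 ∉ H ∧ openAdj ω p.1 p.2} ⊆
      ((H' \ H).biUnion (fun b => (Box b 1).image (fun a => (a, b))) : Finset (Vtx d × Vtx d)) := by
    rintro ⟨a, b⟩ ⟨h1, h2, h3⟩
    simp only at h1 h2 h3
    simp only [Finset.coe_biUnion, Set.mem_iUnion, Finset.mem_coe, Finset.mem_image, exists_prop,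
      Finset.mem_sdiff, Prod.mk.injEq]
    refine ⟨b, ⟨?_, h2⟩, a, adj_mem_Box (adjV_symm h3.1), rfl, rfl⟩
    obtain ⟨ha, hca⟩ := mem_Cl.1 h1
    have hs := Box_mono (0 : Vtx d) (Nat.le_succ k)
    have hb : b ∈ Box (0 : Vtx d) (k+1) := Box_sub ha (by omega) (adj_mem_Box h3.1)
    exact mem_Cl.2 ⟨hb, (hca.monoD hs).trans (Relation.ReflTransGen.single ⟨hs ha, hb, h3⟩)⟩
  unfold openBoundaryCard
  refine (Set.ncard_le_ncard hsub (Finset.finite_toSet _)).trans ?_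
  rw [Set.ncard_coe_finset]
  refine (Finset.card_biUnion_le_card_mul _ _ (3 ^ d) (fun b _ => ?_)).trans (le_of_eq (mul_comm _ _))
  refine Finset.card_image_le.trans (le_of_eq ?_)
  rw [card_Box]

lemma pow_add_le {a r : ℝ} (h0 : 0 ≤ a) (h1 : a ≤ 1) (hr : 1 ≤ r) (e : ℕ) :
    (r + a) ^ (e+1) ≤ r ^ (e+1) + a * 3 ^ (e+1) * r ^ e := by
  induction e with
  | zero => simp; linarith
  | succ e ih =>
    have hr0 : 0 ≤ r ^ e := by positivity
    have h3 : (1:ℝ) ≤ 3 ^ (e+1) := one_le_pow₀ (by norm_num)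
    calc (r + a) ^ (e+1+1) = (r + a) ^ (e+1) * (r + a) := by ring
      _ ≤ (r ^ (e+1) + a * 3 ^ (e+1) * r ^ e) * (r + a) :=
        mul_le_mul_of_nonneg_right ih (by linarith)
      _ = r ^ (e+1+1) + a * r ^ (e+1) * (1 + 3 ^ (e+1)) + a * 3 ^ (e+1) * r ^ e * a := by ring
      _ ≤ r ^ (e+1+1) + a * r ^ (e+1) * (1 + 3 ^ (e+1)) + a * 3 ^ (e+1) * r ^ e * r := by
        have : 0 ≤ a * 3 ^ (e+1) * r ^ e := by positivity
        nlinarith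
      _ = r ^ (e+1+1) + a * r ^ (e+1) * (1 + 3 ^ (e+1) + 3 ^ (e+1)) := by ring
      _ ≤ r ^ (e+1+1) + a * r ^ (e+1) * (3 ^ (e+1) + 3 ^ (e+1) + 3 ^ (e+1)) := by
        have : 0 ≤ a * r ^ (e+1) := by positivity
        nlinarith
      _ = _ := by ring

set_option maxHeartbeats 1000000 in
lemma growth (hd : 1 ≤ d) {c : ℝ} (hc : 0 < c) (n0 : ℕ) : ∃ c1 : ℝ, 0 < c1 ∧ ∀ ω : Config d,
    (∀ n : ℕ, n0 ≤ n → c ≤ n * anchoredProfile ω n) →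
    ∀ N : ℕ, c1 * (N : ℝ) ^ d ≤ (Cl ω (Box 0 N) 0).card := by
  obtain ⟨e, he⟩ : ∃ e, d = e + 1 := ⟨d - 1, by omega⟩
  set c2 : ℝ := c / (3 ^ d * (n0 + 3)) with hc2
  have hc2p : 0 < c2 := by positivity
  set a : ℝ := min 1 (c2 / 3 ^ d) with ha
  have ha0 : 0 < a := lt_min one_pos (by positivity)
  have ha1 : a ≤ 1 := min_le_left _ _
  have ha2 : a * 3 ^ d ≤ c2 := by
    rw [← le_div_iff₀ (by positivity)]; exact min_le_right _ _
  refine ⟨a ^ d, by positivity, fun ω hω => ?_⟩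
  have key : ∀ k : ℕ, (1 + a * k) ^ d ≤ ((Cl ω (Box 0 k) 0).card : ℝ) := by
    intro k
    induction k with
    | zero =>
      have : (0 : Vtx d) ∈ Cl ω (Box 0 0) 0 := mem_Cl.2 ⟨self_mem_Box _ _, Conn.refl _ _ _⟩
      have : 1 ≤ (Cl ω (Box (0 : Vtx d) 0) 0).card := Finset.card_pos.2 ⟨_, this⟩
      have : (1:ℝ) ≤ (Cl ω (Box (0 : Vtx d) 0) 0).card := by exact_mod_cast this
      simpa using this
    | succ k ih =>
      set H := Cl ω (Box (0 : Vtx d) k) 0 with hH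
      set H' := Cl ω (Box (0 : Vtx d) (k+1)) 0 with hH'
      have hsub : H ⊆ H' := Cl_mono le_rfl (Box_mono _ (Nat.le_succ k)) _
      have hcard : ((H' \ H).card : ℝ) = H'.card - H.card := by
        rw [Finset.card_sdiff_of_subset hsub, Nat.cast_sub (Finset.card_le_card hsub)]
      have hmono : (H.card : ℝ) ≤ H'.card := by exact_mod_cast Finset.card_le_card hsub
      set r : ℝ := 1 + a * k with hr
      have hr1 : 1 ≤ r := by
        have : 0 ≤ a * k := by positivity
        linarith
      have e1 : (1 + a * ((k + 1 : ℕ) : ℝ)) = r + a := by push_cast; rw [hr]; ring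
      rw [e1]
      by_cases hcase : (r + a) ^ d ≤ H.card
      · exact hcase.trans hmono
      push Not at hcase
      set n : ℕ := ⌈r + a⌉₊ + n0 with hn
      have hn1 : r + a ≤ n := by
        have := Nat.le_ceil (r + a)
        rw [hn]; push_cast
        have : (0:ℝ) ≤ n0 := Nat.cast_nonneg _
        linarith
      have hn2 : (n : ℝ) ≤ (n0 + 3) * r := by
        have := (Nat.ceil_lt_add_one (by linarith : 0 ≤ r + a)).le
        rw [hn]; push_cast
        have : (0:ℝ) ≤ n0 := Nat.cast_nonneg _
        nlinarith
      have hHn : H.card ≤ n ^ d := by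
        have : (H.card : ℝ) ≤ (n : ℝ) ^ d :=
          hcase.le.trans (pow_le_pow_left₀ (by linarith) hn1 d)
        exact_mod_cast this
      have h1 := profile_le (hω n (by omega)) (H := H)
        (mem_Cl.2 ⟨self_mem_Box _ _, Conn.refl _ _ _⟩)
        (fun x hx => Cl_conn (self_mem_Box _ _) (mem_Cl.1 hx).2) hHn
      have h2 : (openBoundaryCard ω H : ℝ) ≤ 3 ^ d * (H'.card - H.card) := by
        rw [← hcard]
        exact_mod_cast boundary_le ω k
      have hD : (0:ℝ) ≤ H'.card - H.card := by linarith
      have h3 : c * r ^ d ≤ (n0 + 3) * r * (3 ^ d * (H'.card - H.card)) := by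
        calc c * r ^ d ≤ c * H.card := mul_le_mul_of_nonneg_left ih hc.le
          _ ≤ n * openBoundaryCard ω H := h1
          _ ≤ n * (3 ^ d * (H'.card - H.card)) := mul_le_mul_of_nonneg_left h2 (Nat.cast_nonneg _)
          _ ≤ _ := mul_le_mul_of_nonneg_right hn2 (by positivity)
      have h4 : c2 * r ^ e ≤ H'.card - H.card := by
        rw [hc2, div_mul_eq_mul_div, div_le_iff₀ (by positivity)]
        have hr0 : 0 < r := by linarith
        have : c * r ^ d = c * r ^ e * r := by rw [he]; ring
        rw [this] at h3
        refine le_of_mul_le_mul_right (h3.trans (le_of_eq ?_)) hr0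
        ring
      have h5 := pow_add_le ha0.le ha1 hr1 e
      have hre : 0 ≤ r ^ e := by positivity
      have h6 : a * 3 ^ d * r ^ e ≤ c2 * r ^ e := mul_le_mul_of_nonneg_right ha2 hre
      have h7 : (r + a) ^ d ≤ r ^ d + a * 3 ^ d * r ^ e := by rw [he]; exact h5
      linarith
  intro N
  refine le_trans ?_ (key N)
  rw [← mul_pow]
  exact pow_le_pow_left₀ (by positivity) (by linarith) d

end Growth


/-! ### Part 5: large clusters near the origin with high probability -/

section Vol

lemma Bern.iindep {E : Type*} {μ : Measure (E → Bool)} {p : ℝ} (h : Bern μ p) {ι : Type*}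
    (I : Finset ι) (S : ι → Finset E) (B : ι → Set (E → Bool)) (hB : ∀ i ∈ I, DetBy (S i) (B i))
    (hS : ∀ i ∈ I, ∀ j ∈ I, i ≠ j → Disjoint (S i) (S j)) :
    μ.real (⋂ i ∈ I, B i) = ∏ i ∈ I, μ.real (B i) := by
  classical
  haveI := h.prob
  induction I using Finset.induction_on with
  | empty => simp
  | insert a I ha ih =>
    rw [Finset.prod_insert ha, Finset.set_biInter_insert,
      ← ih (fun i hi => hB i (Finset.mem_insert_of_mem hi)) (fun i hi j hj =>
        hS i (Finset.mem_insert_of_mem hi) j (Finset.mem_insert_of_mem hj))]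
    refine h.indep (T := I.biUnion S) ?_ (hB a (Finset.mem_insert_self _ _)) ?_
    · rw [Finset.disjoint_biUnion_right]
      intro i hi
      exact hS a (Finset.mem_insert_self _ _) i (Finset.mem_insert_of_mem hi)
        (fun hh => ha (hh ▸ hi))
    · refine DetBy.iInter (fun i => DetBy.iInter (fun hi => ?_))
      exact (hB i (Finset.mem_insert_of_mem hi)).mono (Finset.subset_biUnion_of_mem S hi)

variable {d : ℕ}

lemma disjoint_sym2 {D D' : Finset (Vtx d)} (h : Disjoint D D') : Disjoint D.sym2 D'.sym2 := by
  rw [Finset.disjoint_left]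
  intro e
  induction e using Sym2.ind with
  | _ a b =>
    intro h1 h2
    rw [Finset.mk_mem_sym2_iff] at h1 h2
    exact Finset.disjoint_left.1 h h1.1 h2.1

/-- Volume lower bound at scale `N` around `x`. -/
def Vol (c1 : ℝ) (ω : Config d) (x : Vtx d) (N : ℕ) : Prop :=
  c1 * (N : ℝ) ^ d ≤ (Cl ω (Box x N) x).card

def VolA (c1 : ℝ) (n : ℕ) (x : Vtx d) : Set (Config d) := {ω | ∀ N ≤ n, Vol c1 ω x N}

lemma VolA_det (c1 : ℝ) (n : ℕ) (x : Vtx d) : DetBy (Box x n).sym2 (VolA c1 n x) := by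
  intro ω ω' hh
  refine forall₂_congr (fun N hN => ?_)
  unfold Vol
  rw [Cl_congr (fun e he => hh e (Finset.sym2_mono (Box_mono x hN) he))]

lemma VolA_anti (c1 : ℝ) (x : Vtx d) {n n' : ℕ} (h : n ≤ n') : VolA c1 n' x ⊆ VolA c1 n x :=
  fun _ hω N hN => hω N (hN.trans h)

lemma VolA_tr (c1 : ℝ) (n : ℕ) (x : Vtx d) :
    VolA c1 n x = {ω | (fun e => ω (Sym2.map (trE x) e)) ∈ VolA c1 n 0} := by
  ext ω
  refine forall₂_congr (fun N hN => ?_)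
  unfold Vol
  have := Cl_map (trE x) (trE_adj x) ω (Box 0 N) 0
  rw [Box_map_tr, trE_apply, zero_add] at this
  rw [← this, Finset.card_map]

lemma VolA_real {μ : Measure (Config d)} {p : ℝ} (h : Bern μ p) (c1 : ℝ) (n : ℕ) (x : Vtx d) :
    μ.real (VolA c1 n x) = μ.real (VolA c1 n 0) := by
  rw [VolA_tr, h.real_preimage _ (sym2map_inj _) (VolA_det c1 n 0).meas]

set_option maxHeartbeats 1000000 in
lemma vol_somewhere (hd : 1 ≤ d) {μ : Measure (Config d)} {p : ℝ} (h : Bern μ p) {c1 δ : ℝ}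
    (hδ : 0 < δ) (hA : ∀ n, δ ≤ μ.real (VolA (d := d) c1 n 0)) {η : ℝ} (hη : 0 < η) :
    ∃ m : ℕ, ∀ N : ℕ,
      μ.real {ω : Config d | ∃ x ∈ Box (0 : Vtx d) m, Vol c1 ω x N}ᶜ ≤ η := by
  haveI := h.prob
  set a : ℕ → ℝ := fun n => μ.real (VolA (d := d) c1 n 0) with ha
  have hδ1 : δ ≤ 1 := (hA 0).trans measureReal_le_one
  obtain ⟨M, hM⟩ : ∃ M : ℕ, (1 - δ) ^ M < η / 2 :=
    exists_pow_lt_of_lt_one (by linarith) (by linarith)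
  have hbdd : BddBelow (Set.range a) := ⟨0, by rintro _ ⟨n, rfl⟩; exact measureReal_nonneg⟩
  obtain ⟨n, hn⟩ : ∃ n, a n < (⨅ n, a n) + η / (2 * (M + 1)) :=
    exists_lt_of_ciInf_lt (by have : 0 < η / (2 * ((M:ℝ) + 1)) := by positivity
                              linarith)
  have hn' : ∀ N, a n - a N ≤ η / (2 * (M + 1)) := by
    intro N
    have := ciInf_le hbdd N
    linarith
  set X : ℕ → Vtx d := fun i _ => (i : ℤ) * (2 * n + 2) with hX
  refine ⟨M * (2 * n + 2), fun N => ?_⟩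
  have hXm : ∀ i ∈ Finset.range M, X i ∈ Box (0 : Vtx d) (M * (2 * n + 2)) := by
    intro i hi
    rw [mem_Box]
    intro j
    have hi' : (i:ℤ) ≤ M := by exact_mod_cast (Finset.mem_range.1 hi).le
    simp only [hX, Pi.zero_apply, sub_zero]
    rw [abs_of_nonneg (by positivity)]
    push_cast
    exact mul_le_mul_of_nonneg_right hi' (by positivity)
  set N' := max N n
  have hsub : {ω : Config d | ∃ x ∈ Box (0 : Vtx d) (M * (2 * n + 2)), Vol c1 ω x N}ᶜ ⊆
      (⋂ i ∈ Finset.range M, (VolA c1 n (X i))ᶜ) ∪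
      ⋃ i ∈ Finset.range M, (VolA c1 n (X i) \ VolA c1 N' (X i)) := by
    intro ω hω
    by_contra hcon
    simp only [Set.mem_union, Set.mem_iInter, Set.mem_iUnion, not_or, not_forall, not_exists,
      Set.mem_compl_iff, not_not, Set.mem_diff, exists_prop, not_and] at hcon
    obtain ⟨⟨i, hi, h1⟩, h2⟩ := hcon
    have := h2 i hi h1
    exact hω ⟨X i, hXm i hi, this N (le_max_left _ _)⟩
  have b1 : μ.real (⋂ i ∈ Finset.range M, (VolA c1 n (X i))ᶜ) ≤ η / 2 := by
    rw [h.iindep (Finset.range M) (fun i => (Box (X i) n).sym2) _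
      (fun i _ => (VolA_det c1 n (X i)).compl)]
    · refine le_trans ?_ hM.le
      calc _ ≤ ∏ i ∈ Finset.range M, (1 - δ) := by
            refine Finset.prod_le_prod (fun _ _ => measureReal_nonneg) (fun i _ => ?_)
            rw [measureReal_compl (VolA_det c1 n (X i)).meas, probReal_univ, VolA_real h]
            linarith [hA n]
        _ = _ := by simp
    · intro i _ j _ hij
      refine disjoint_sym2 (Finset.disjoint_left.2 (fun y h1 h2 => hij ?_))
      have h1 := abs_le.1 (mem_Box.1 h1 ⟨0, hd⟩)
      have h2 := abs_le.1 (mem_Box.1 h2 ⟨0, hd⟩)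
      simp only [hX] at h1 h2
      have e1 : ((i:ℤ) - j) * (2 * n + 2) ≤ 2 * n := by linarith [h1.1, h2.2]
      have e2 : -(2 * n) ≤ ((i:ℤ) - j) * (2 * n + 2) := by linarith [h1.2, h2.1]
      have hn0 : (0:ℤ) ≤ n := by positivity
      have f1 : (i:ℤ) - j < 1 := by nlinarith
      have f2 : -1 < (i:ℤ) - j := by nlinarith
      omega
  have b2 : μ.real (⋃ i ∈ Finset.range M, (VolA c1 n (X i) \ VolA c1 N' (X i))) ≤ η / 2 := by
    refine (measureReal_biUnion_finset_le _ _).trans ?_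
    have : ∀ i ∈ Finset.range M, μ.real (VolA c1 n (X i) \ VolA c1 N' (X i)) ≤
        η / (2 * (M + 1)) := by
      intro i _
      rw [measureReal_diff (VolA_anti c1 _ (le_max_right _ _)) (VolA_det c1 N' (X i)).meas,
        VolA_real h c1 n, VolA_real h c1 N']
      exact hn' N'
    refine (Finset.sum_le_sum this).trans ?_
    simp only [Finset.sum_const, Finset.card_range, nsmul_eq_mul]
    rw [mul_div_assoc', div_le_div_iff₀ (by positivity) (by norm_num)]
    nlinarith
  calc _ ≤ _ := measureReal_mono hsub
    _ ≤ _ := measureReal_union_le _ _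
    _ ≤ η := by linarith

end Vol


/-! ### Part 6: directed large connections with high probability -/

section Pieces

variable {d : ℕ}

/-- Directions: a main coordinate and a sign vector. -/
abbrev Dir (d : ℕ) := Fin d × (Fin d → ℤˣ)

/-- number of directions -/
def K0 (d : ℕ) : ℕ := Fintype.card (Dir d)

lemma K0_pos (hd : 1 ≤ d) : 0 < K0 d :=
  Fintype.card_pos_iff.2 ⟨(⟨0, hd⟩, fun _ => 1)⟩

def inPiece (l : ℕ) (D : Dir d) (y : Vtx d) : Prop :=
  (∀ j, 0 ≤ (D.2 j : ℤ) * y j) ∧ (l : ℤ) < (D.2 D.1 : ℤ) * y D.1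

open Classical in
/-- Some point near `b` has a large cluster in direction `D`. -/
def EvE (J m l : ℕ) (D : Dir d) (b : Vtx d) : Set (Config d) :=
  {ω | ∃ x ∈ Box b m,
    l ^ d ≤ K0 d * ((Cl ω (Box b (J * l)) x).filter (fun y => inPiece l D (y - b))).card}

lemma EvE_det (J m l : ℕ) (D : Dir d) (b : Vtx d) :
    DetBy (Box b (J * l)).sym2 (EvE J m l D b) := by
  classical
  intro ω ω' hh
  simp only [EvE, Set.mem_setOf_eq]
  refine exists_congr (fun x => ?_)
  rw [Cl_congr hh]

lemma EvE_incr (J m l : ℕ) (D : Dir d) (b : Vtx d) : Incr (EvE J m l D b) := by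
  classical
  rintro ω ω' hh ⟨x, hx, h⟩
  refine ⟨x, hx, h.trans (Nat.mul_le_mul_left _ (Finset.card_le_card ?_))⟩
  exact Finset.filter_subset_filter _ (Cl_mono hh (Finset.Subset.refl _) x)

lemma EvE_tr (J m l : ℕ) (D : Dir d) (b : Vtx d) :
    EvE J m l D b = {ω | (fun e => ω (Sym2.map (trE b) e)) ∈ EvE J m l D 0} := by
  classical
  ext ω
  simp only [EvE, Set.mem_setOf_eq]
  have key : ∀ x, ((Cl ω (Box b (J * l)) (x + b)).filter (fun y => inPiece l D (y - b))).card =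
      ((Cl (fun e => ω (Sym2.map (trE b) e)) (Box 0 (J * l)) x).filter
        (fun y => inPiece l D (y - 0))).card := by
    intro x
    have := Cl_map (trE b) (trE_adj b) ω (Box 0 (J * l)) x
    rw [Box_map_tr, trE_apply, zero_add] at this
    rw [← this, Finset.filter_map, Finset.card_map]
    congr 1
    refine Finset.filter_congr (fun y _ => ?_)
    simp [trE_apply]
  have hb : ∀ x, x + b ∈ Box b m ↔ x ∈ Box (0 : Vtx d) m := by
    intro x; simp [mem_Box]
  constructor
  · rintro ⟨x, hx, h⟩
    refine ⟨x - b, (hb _).1 (by simpa using hx), ?_⟩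
    rw [← key, sub_add_cancel]; exact h
  · rintro ⟨x, hx, h⟩
    refine ⟨x + b, (hb _).2 hx, ?_⟩
    rw [key]; exact h

lemma units_sq (u : ℤˣ) : (u : ℤ) * u = 1 := by
  rw [← Units.val_mul, Int.units_mul_self]; rfl

lemma EvE_sym (J m l : ℕ) (D D' : Dir d) : ∃ φ : Vtx d ≃ Vtx d,
    EvE J m l D' 0 = {ω | (fun e => ω (Sym2.map φ e)) ∈ EvE J m l D 0} := by
  classical
  set σ : Equiv.Perm (Fin d) := Equiv.swap D.1 D'.1 with hσ
  set t : Fin d → ℤˣ := fun j => D'.2 j * D.2 (σ j) with ht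
  refine ⟨sgE t σ, ?_⟩
  have ts : ∀ j, (D'.2 j : ℤ) * (t j : ℤ) = D.2 (σ j) := by
    intro j
    rw [ht]
    push_cast
    rw [← mul_assoc, units_sq, one_mul]
  have hp : ∀ y, inPiece l D' (sgE t σ y) ↔ inPiece l D y := by
    intro y
    unfold inPiece
    simp only [sgE_apply, ← mul_assoc, ts]
    have e : σ D'.1 = D.1 := by rw [hσ, Equiv.swap_apply_right]
    rw [e]
    refine and_congr_left (fun _ => ?_)
    exact ⟨fun h j => by simpa using h (σ.symm j), fun h j => h (σ j)⟩
  ext ω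
  simp only [EvE, Set.mem_setOf_eq]
  have key : ∀ x, ((Cl ω (Box 0 (J * l)) (sgE t σ x)).filter (fun y => inPiece l D' (y - 0))).card =
      ((Cl (fun e => ω (Sym2.map (sgE t σ) e)) (Box 0 (J * l)) x).filter
        (fun y => inPiece l D (y - 0))).card := by
    intro x
    have := Cl_map (sgE t σ) (sgE_adj t σ) ω (Box 0 (J * l)) x
    rw [Box_map_sg] at this
    rw [← this, Finset.filter_map, Finset.card_map]
    congr 1
    refine Finset.filter_congr (fun y _ => ?_)
    simp [hp]
  constructor
  · rintro ⟨x, hx, h⟩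
    refine ⟨(sgE t σ).symm x, (sgE_mem_Box t σ _ _).1 (by simpa using hx), ?_⟩
    rw [← key, Equiv.apply_symm_apply]; exact h
  · rintro ⟨x, hx, h⟩
    refine ⟨sgE t σ x, (sgE_mem_Box t σ _ _).2 hx, ?_⟩
    rw [key]; exact h

lemma EvE_real {μ : Measure (Config d)} {p : ℝ} (h : Bern μ p) (J m l : ℕ) (D D' : Dir d)
    (b b' : Vtx d) : μ.real (EvE J m l D b)ᶜ = μ.real (EvE J m l D' b')ᶜ := by
  haveI := h.prob
  have e1 : ∀ (D : Dir d) (b : Vtx d), μ.real (EvE J m l D b) = μ.real (EvE J m l D 0) := by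
    intro D b
    rw [EvE_tr, h.real_preimage _ (sym2map_inj _) (EvE_det J m l D 0).meas]
  have e2 : μ.real (EvE J m l D' 0) = μ.real (EvE J m l D 0) := by
    obtain ⟨φ, hφ⟩ := EvE_sym J m l D D'
    rw [hφ, h.real_preimage _ (sym2map_inj _) (EvE_det J m l D 0).meas]
  rw [measureReal_compl (EvE_det J m l D b).meas, measureReal_compl (EvE_det J m l D' b').meas,
    e1 D b, e1 D' b', e2]

lemma vol_sub_EvE (hd : 1 ≤ d) {c1 : ℝ} {k : ℕ} (hk1 : 1 ≤ k) (hk : 2 * 3 ^ d ≤ c1 * k)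
    (hc1 : 0 ≤ c1) {m l : ℕ} (hml : m ≤ l) (hl : 1 ≤ l) :
    {ω : Config d | ∃ x ∈ Box (0 : Vtx d) m, Vol c1 ω x (k * l)} ⊆
      ⋃ D ∈ (Finset.univ : Finset (Dir d)), EvE (k+1) m l D 0 := by
  classical
  rintro ω ⟨x, hx, hv⟩
  set C := Cl ω (Box (0 : Vtx d) ((k+1) * l)) x with hC
  have hsub : Cl ω (Box x (k * l)) x ⊆ C :=
    Cl_mono le_rfl (Box_sub hx (by nlinarith)) x
  have hvol : 2 * 3 ^ d * l ^ d ≤ C.card := by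
    have h1 : (2 * 3 ^ d * l ^ d : ℝ) ≤ C.card := by
      calc (2 * 3 ^ d * l ^ d : ℝ) ≤ c1 * k * l ^ d :=
            mul_le_mul_of_nonneg_right hk (by positivity)
        _ ≤ c1 * k ^ d * l ^ d := by
            have : (k:ℝ) ≤ (k:ℝ) ^ d :=
              le_self_pow₀ (by exact_mod_cast hk1) (by omega)
            gcongr
        _ = c1 * ((k * l : ℕ) : ℝ) ^ d := by push_cast; rw [mul_pow]; ring
        _ ≤ (Cl ω (Box x (k * l)) x).card := hv
        _ ≤ C.card := by exact_mod_cast Finset.card_le_card hsub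
    exact_mod_cast h1
  by_contra hcon
  simp only [Set.mem_iUnion, Finset.mem_univ, exists_prop, true_and, not_exists] at hcon
  have hlt : ∀ D : Dir d, K0 d * (C.filter (fun y => inPiece l D (y - 0))).card < l ^ d := by
    intro D
    by_contra hh
    exact hcon D ⟨x, hx, not_lt.1 hh⟩
  have hcov : C \ Box 0 l ⊆
      Finset.univ.biUnion (fun D : Dir d => C.filter (fun y => inPiece l D (y - 0))) := by
    intro y hy
    rw [Finset.mem_sdiff, mem_Box, not_forall] at hy
    obtain ⟨hyC, i, hi⟩ := hy
    simp only [Pi.zero_apply, sub_zero, not_le] at hi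
    rw [Finset.mem_biUnion]
    have hs : ∀ j, (((if 0 ≤ y j then 1 else -1 : ℤˣ) : ℤˣ) : ℤ) * y j = |y j| := by
      intro j
      split_ifs with h
      · simp [abs_of_nonneg h]
      · push Not at h
        simp [abs_of_neg h]
    refine ⟨(i, fun j => if 0 ≤ y j then 1 else -1), Finset.mem_univ _, ?_⟩
    rw [Finset.mem_filter]
    refine ⟨hyC, ?_⟩
    unfold inPiece
    simp only [sub_zero, hs]
    exact ⟨fun j => abs_nonneg _, hi⟩
  have h1 : (C \ Box 0 l).card ≤ ∑ D : Dir d, (C.filter (fun y => inPiece l D (y - 0))).card :=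
    (Finset.card_le_card hcov).trans Finset.card_biUnion_le
  have h2 : C.card ≤ (C \ Box 0 l).card + (Box (0 : Vtx d) l).card := by
    have := Finset.le_card_sdiff (Box (0 : Vtx d) l) C
    omega
  have h3 : (Box (0 : Vtx d) l).card ≤ 3 ^ d * l ^ d := by
    rw [card_Box, ← mul_pow]
    exact Nat.pow_le_pow_left (by omega) d
  have h4 : l ^ d ≤ (C \ Box 0 l).card := by
    have : 1 ≤ 3 ^ d := Nat.one_le_pow _ _ (by norm_num)
    have : l ^ d ≤ 3 ^ d * l ^ d := Nat.le_mul_of_pos_left _ this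
    nlinarith
  have hne : (Finset.univ : Finset (Dir d)).Nonempty := ⟨(⟨0, hd⟩, fun _ => 1), Finset.mem_univ _⟩
  have h5 : ∑ D : Dir d, K0 d * (C.filter (fun y => inPiece l D (y - 0))).card <
      ∑ D : Dir d, l ^ d := Finset.sum_lt_sum_of_nonempty hne (fun D _ => hlt D)
  rw [← Finset.mul_sum] at h5
  simp only [Finset.sum_const, Finset.card_univ, smul_eq_mul] at h5
  have h6 : K0 d * l ^ d ≤ K0 d * ∑ D : Dir d, (C.filter (fun y => inPiece l D (y - 0))).card :=
    Nat.mul_le_mul_left _ (h4.trans h1)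
  have : K0 d * l ^ d = Fintype.card (Dir d) * l ^ d := rfl
  omega

lemma EvE_prob (hd : 1 ≤ d) {μ : Measure (Config d)} {p : ℝ} (h : Bern μ p) {c1 δ : ℝ}
    (hc1 : 0 < c1) (hδ : 0 < δ) (hA : ∀ n, δ ≤ μ.real (VolA (d := d) c1 n 0)) :
    ∃ J : ℕ, 1 ≤ J ∧ ∀ η : ℝ, 0 < η → ∃ m : ℕ, ∀ l : ℕ, m ≤ l → 1 ≤ l → ∀ (D : Dir d) (b : Vtx d),
      μ.real (EvE J m l D b)ᶜ ≤ η := by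
  haveI := h.prob
  obtain ⟨k0, hk0⟩ := exists_nat_ge (2 * 3 ^ d / c1)
  have hk : (2 * 3 ^ d : ℝ) ≤ c1 * (k0 + 1 : ℕ) := by
    rw [div_le_iff₀ hc1] at hk0
    push_cast
    nlinarith
  refine ⟨k0 + 1 + 1, by omega, fun η hη => ?_⟩
  obtain ⟨m, hm⟩ := vol_somewhere hd h hδ hA (η := η ^ (K0 d)) (by positivity)
  refine ⟨m, fun l hml hl D b => ?_⟩
  have h1 := hm ((k0 + 1) * l)
  have h2 := h.sqrt_trick (Finset.univ : Finset (Dir d)) (fun D => EvE (k0 + 1 + 1) m l D 0)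
    (fun D => EvE_det _ _ _ D 0) (fun D => EvE_incr _ _ _ D 0)
  have h3 := vol_sub_EvE hd (by omega) hk hc1.le hml hl
  have h4 := h2.trans ((measureReal_mono (Set.compl_subset_compl.2 h3)).trans h1)
  have h5 : ∏ D' : Dir d, μ.real (EvE (k0 + 1 + 1) m l D' 0)ᶜ =
      (μ.real (EvE (k0 + 1 + 1) m l D b)ᶜ) ^ (K0 d) := by
    rw [Finset.prod_congr rfl (fun D' _ => EvE_real h (k0 + 1 + 1) m l D' D 0 b)]
    simp [K0]
  rw [h5] at h4
  exact le_of_pow_le_pow_left₀ (K0_pos hd).ne' hη.le h4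

end Pieces


/-! ### Part 7: coarse graining, deterministic part -/

section Geometry

variable {d : ℕ}

/-- The union of cells of side `l` with index within sup-distance `r` of `u`. -/
noncomputable def Reg (l : ℕ) (u : Vtx d) (r : ℕ) : Finset (Vtx d) :=
  Finset.Icc (fun j => (l : ℤ) * (u j - r)) (fun j => (l : ℤ) * (u j + r) + l - 1)

lemma mem_Reg {l : ℕ} (hl : 1 ≤ l) {u y : Vtx d} {r : ℕ} :
    y ∈ Reg l u r ↔ ∀ j, |y j / (l : ℤ) - u j| ≤ r := by
  have hl' : (0 : ℤ) < l := by exact_mod_cast hl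
  rw [Reg, Finset.mem_Icc, Pi.le_def, Pi.le_def, ← forall_and]
  refine forall_congr' (fun j => ?_)
  rw [abs_le]
  have h1 : (l : ℤ) * (u j - r) ≤ y j ↔ u j - r ≤ y j / (l : ℤ) := by
    rw [Int.le_ediv_iff_mul_le hl', mul_comm]
  have h2 : y j ≤ (l : ℤ) * (u j + r) + l - 1 ↔ y j / (l : ℤ) < u j + r + 1 := by
    rw [Int.ediv_lt_iff_lt_mul hl']
    constructor <;> intro h <;> nlinarith
  rw [h1, h2]
  constructor <;> rintro ⟨h1, h2⟩ <;> constructor <;> linarith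

lemma mem_Reg0 {l : ℕ} (hl : 1 ≤ l) {u y : Vtx d} :
    y ∈ Reg l u 0 ↔ ∀ j, y j / (l : ℤ) = u j := by
  rw [mem_Reg hl]
  refine forall_congr' (fun j => ?_)
  simp [abs_nonpos_iff, sub_eq_zero]

lemma card_Reg0 (l : ℕ) (u : Vtx d) : (Reg l u 0).card = l ^ d := by
  rw [Reg, Pi.card_Icc]
  simp only [Int.card_Icc]
  have : ∀ j : Fin d, ((l : ℤ) * (u j + (0:ℕ)) + l - 1 + 1 - (l : ℤ) * (u j - (0:ℕ))).toNat = l := by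
    intro j
    have : (l : ℤ) * (u j + (0:ℕ)) + l - 1 + 1 - (l : ℤ) * (u j - (0:ℕ)) = l := by push_cast; ring
    rw [this]; simp
  simp [this]

lemma Reg_sub {l : ℕ} (hl : 1 ≤ l) {u u' : Vtx d} {r r' k : ℕ} (h : ∀ j, |u j - u' j| ≤ k)
    (hr : r + k ≤ r') : Reg l u r ⊆ Reg l u' r' := by
  intro y hy
  rw [mem_Reg hl] at *
  intro j
  have h1 := abs_le.1 (h j)
  have h2 := abs_le.1 (hy j)
  have : (r : ℤ) + k ≤ r' := by exact_mod_cast hr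
  rw [abs_le]
  constructor <;> linarith [h1.1, h1.2, h2.1, h2.2]

lemma Reg_mono {l : ℕ} (hl : 1 ≤ l) (u : Vtx d) {r r' : ℕ} (h : r ≤ r') :
    Reg l u r ⊆ Reg l u r' :=
  Reg_sub hl (k := 0) (by simp) (by omega)

/-- A fully open box is connected. -/
lemma conn_of_open {ω : Config d} {lo hi : Vtx d} (hω : ∀ e ∈ (Finset.Icc lo hi).sym2, ω e = true)
    {x y : Vtx d} (hx : x ∈ Finset.Icc lo hi) (hy : y ∈ Finset.Icc lo hi) :
    Conn ω (Finset.Icc lo hi) x y := by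
  have key : ∀ (k : ℕ) (x : Vtx d), x ∈ Finset.Icc lo hi → (∑ i, (x i - y i).natAbs) = k →
      Conn ω (Finset.Icc lo hi) x y := by
    intro k
    induction k with
    | zero =>
      intro x hx h
      rw [Finset.sum_eq_zero_iff] at h
      have : x = y := by
        funext i
        have := h i (Finset.mem_univ i)
        omega
      rw [this]; exact Conn.refl _ _ _
    | succ k ih =>
      intro x hx h
      obtain ⟨i, hne⟩ : ∃ i, x i ≠ y i := by
        by_contra hcon
        push Not at hcon
        simp [hcon] at h
      set t : ℤ := if x i < y i then 1 else -1 with ht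
      set x' := Function.update x i (x i + t) with hx'
      have hx'D : x' ∈ Finset.Icc lo hi := by
        rw [Finset.mem_Icc] at hx hy ⊢
        constructor
        · intro j
          by_cases hj : j = i
          · subst hj
            have a1 : lo j ≤ x j := hx.1 j
            have a2 : x j ≤ hi j := hx.2 j
            have a3 : lo j ≤ y j := hy.1 j
            have a4 : y j ≤ hi j := hy.2 j
            simp only [hx', Function.update_self]
            rw [ht]; split_ifs <;> omega
          · simp only [hx', Function.update_of_ne hj]; exact hx.1 j
        · intro j
          by_cases hj : j = i
          · subst hj
            have a1 : lo j ≤ x j := hx.1 j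
            have a2 : x j ≤ hi j := hx.2 j
            have a3 : lo j ≤ y j := hy.1 j
            have a4 : y j ≤ hi j := hy.2 j
            simp only [hx', Function.update_self]
            rw [ht]; split_ifs <;> omega
          · simp only [hx', Function.update_of_ne hj]; exact hx.2 j
      have hadj : adjV x x' := by
        unfold adjV
        rw [Finset.sum_eq_single i]
        · simp only [hx', Function.update_self]
          rw [ht]; split_ifs <;> simp
        · intro j _ hj
          simp [hx', Function.update_of_ne hj]
        · intro hh; exact absurd (Finset.mem_univ i) hh
      have hsum : (∑ j, (x' j - y j).natAbs) = k := by
        have e1 := Finset.sum_erase_add Finset.univ (fun j => (x' j - y j).natAbs)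
          (Finset.mem_univ i)
        have e2 := Finset.sum_erase_add Finset.univ (fun j => (x j - y j).natAbs)
          (Finset.mem_univ i)
        have e3 : ∑ j ∈ Finset.univ.erase i, (x' j - y j).natAbs =
            ∑ j ∈ Finset.univ.erase i, (x j - y j).natAbs := by
          refine Finset.sum_congr rfl (fun j hj => ?_)
          simp only [hx', Function.update_of_ne (Finset.ne_of_mem_erase hj)]
        have e4 : (x' i - y i).natAbs + 1 = (x i - y i).natAbs := by
          simp only [hx', Function.update_self]
          rw [ht]; split_ifs <;> omega
        omega
      refine Relation.ReflTransGen.head ?_ (ih x' hx'D hsum)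
      refine ⟨hx, hx'D, hadj, hω _ ?_⟩
      rw [Finset.mk_mem_sym2_iff]; exact ⟨hx, hx'D⟩
  exact key _ x hx rfl

/-- the combinatorial constant -/
def KK (d J : ℕ) : ℕ := K0 d * (J + 1) ^ d

/-- `v` is in the cell `u` and its cluster is dense in that cell. -/
def DenseC (J l : ℕ) (ω : Config d) (u v : Vtx d) : Prop :=
  v ∈ Reg l u 0 ∧ l ^ d ≤ KK d J * (Cl ω (Reg l u (2 * J)) v ∩ Reg l u 0).card

lemma DenseC.mono {J l : ℕ} {ω ω' : Config d} (hω : ω ≤ ω') {u v : Vtx d} (h : DenseC J l ω u v) :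
    DenseC J l ω' u v := by
  refine ⟨h.1, h.2.trans (Nat.mul_le_mul_left _ (Finset.card_le_card ?_))⟩
  exact Finset.inter_subset_inter_right (Cl_mono hω (Finset.Subset.refl _) v)

lemma DenseC.congr {J l : ℕ} {ω ω' : Config d} {u : Vtx d}
    (h : ∀ e ∈ (Reg l u (2 * J)).sym2, ω e = ω' e) (v : Vtx d) :
    DenseC J l ω u v ↔ DenseC J l ω' u v := by
  unfold DenseC
  rw [Cl_congr h]

lemma DenseC.of_conn {J l : ℕ} {ω : Config d} {u v v' : Vtx d} (h : DenseC J l ω u v)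
    (hv' : v' ∈ Reg l u 0) (hc : Conn ω (Reg l u (2 * J)) v v') : DenseC J l ω u v' := by
  refine ⟨hv', ?_⟩
  rw [← Cl_eq_of_conn hc]
  exact h.2

/-- Allowed coarse moves in direction `D`. -/
def Allowed (J : ℕ) (D : Dir d) (u u' : Vtx d) : Prop :=
  (∀ j, 0 ≤ (D.2 j : ℤ) * (u' j - u j) ∧ (D.2 j : ℤ) * (u' j - u j) ≤ J) ∧
    1 ≤ (D.2 D.1 : ℤ) * (u' D.1 - u D.1)

lemma Allowed.abs_le {J : ℕ} {D : Dir d} {u u' : Vtx d} (h : Allowed J D u u') (j : Fin d) :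
    |u' j - u j| ≤ J := by
  rw [← abs_units_mul (D.2 j), abs_of_nonneg (h.1 j).1]
  exact (h.1 j).2

/-- The event that from `v` one can move in direction `D`. -/
def FF (J l : ℕ) (u : Vtx d) (D : Dir d) (v : Vtx d) : Set (Config d) :=
  {ω | ∃ u' v', Allowed J D u u' ∧ DenseC J l ω u' v' ∧ Conn ω (Reg l u (3 * J)) v v'}

lemma FF_incr (J l : ℕ) (u : Vtx d) (D : Dir d) (v : Vtx d) : Incr (FF J l u D v) := by
  rintro ω ω' hω ⟨u', v', h1, h2, h3⟩
  exact ⟨u', v', h1, h2.mono hω, h3.mono hω (Finset.Subset.refl _)⟩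

lemma FF_det {J l : ℕ} (hl : 1 ≤ l) (u : Vtx d) (D : Dir d) (v : Vtx d) :
    DetBy (Reg l u (3 * J)).sym2 (FF J l u D v) := by
  intro ω ω' hh
  refine exists_congr (fun u' => exists_congr (fun v' => and_congr_right (fun h => ?_)))
  have hs : Reg l u' (2 * J) ⊆ Reg l u (3 * J) := Reg_sub hl (k := J) h.abs_le (by omega)
  rw [DenseC.congr (fun e he => hh e (Finset.sym2_mono hs he)), Conn.congr hh]

/-- centre of a small box -/
def ctr (m : ℕ) (a : Vtx d) : Vtx d := fun j => ((2 * m + 1 : ℕ) : ℤ) * a j + m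

lemma small_box_eq (m : ℕ) (a : Vtx d) : Reg (2 * m + 1) a 0 = Box (ctr m a) m := by
  unfold Reg Box ctr
  congr 1 <;> funext j <;> push_cast <;> ring

lemma ctr_mem {m n : ℕ} (hn : 1 ≤ n) {a u : Vtx d} (ha : a ∈ Reg n u 0) (j : Fin d) :
    ctr m a j / (((2 * m + 1) * n : ℕ) : ℤ) = u j := by
  have h1 : ctr m a j / ((2 * m + 1 : ℕ) : ℤ) = a j := by
    have : ctr m a ∈ Reg (2 * m + 1) a 0 := by rw [small_box_eq]; exact self_mem_Box _ _
    exact (mem_Reg0 (by omega)).1 this j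
  rw [Nat.cast_mul, ← Int.ediv_ediv_of_nonneg (by positivity), h1]
  exact (mem_Reg0 hn).1 ha j

lemma smallBox_sub {m n : ℕ} (hn : 1 ≤ n) {a u : Vtx d} (ha : a ∈ Reg n u 0) :
    Reg (2 * m + 1) a 0 ⊆ Reg ((2 * m + 1) * n) u 0 := by
  intro y hy
  rw [mem_Reg0 (Nat.mul_pos (by omega) hn)]
  rw [mem_Reg0 (by omega)] at hy
  rw [mem_Reg0 hn] at ha
  intro j
  rw [Nat.cast_mul, ← Int.ediv_ediv_of_nonneg (by positivity), hy j, ha j]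

lemma box_sub_reg {m n J : ℕ} (hn : 1 ≤ n) {a u : Vtx d} (ha : a ∈ Reg n u 0) :
    Box (ctr m a) (J * ((2 * m + 1) * n)) ⊆ Reg ((2 * m + 1) * n) u J := by
  set l := (2 * m + 1) * n with hl
  have hl1 : 1 ≤ l := Nat.mul_pos (by omega) hn
  have hl' : (0 : ℤ) < l := by exact_mod_cast hl1
  intro y hy
  rw [mem_Box] at hy
  rw [mem_Reg hl1]
  intro j
  have h1 := abs_le.1 (hy j)
  have h2 := ctr_mem (m := m) hn ha j
  rw [← hl] at h2
  have hJ : ((J * l : ℕ) : ℤ) = J * l := by push_cast; ring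
  rw [hJ] at h1
  have a1 : y j / (l : ℤ) ≤ (ctr m a j + J * l) / (l : ℤ) :=
    Int.ediv_le_ediv hl' (by linarith [h1.2])
  have a2 : (ctr m a j + (-(J : ℤ)) * l) / (l : ℤ) ≤ y j / (l : ℤ) :=
    Int.ediv_le_ediv hl' (by linarith [h1.1])
  rw [Int.add_mul_ediv_right _ _ hl'.ne', h2] at a1 a2
  rw [abs_le]
  constructor <;> linarith

lemma piece_allowed {m n J : ℕ} (hn : 1 ≤ n) {a u : Vtx d} (ha : a ∈ Reg n u 0) {D : Dir d}
    {y : Vtx d} (hy : y ∈ Box (ctr m a) (J * ((2 * m + 1) * n)))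
    (hp : inPiece ((2 * m + 1) * n) D (y - ctr m a)) :
    Allowed J D u (fun j => y j / (((2 * m + 1) * n : ℕ) : ℤ)) := by
  have hR := box_sub_reg hn ha hy
  have h2 := ctr_mem (m := m) hn ha
  set l := (2 * m + 1) * n with hl
  have hl1 : 1 ≤ l := Nat.mul_pos (by omega) hn
  have hl' : (0 : ℤ) < l := by exact_mod_cast hl1
  rw [mem_Reg hl1] at hR
  unfold inPiece at hp
  simp only [Pi.sub_apply] at hp
  refine ⟨fun j => ?_, ?_⟩
  · have h3 : 0 ≤ (D.2 j : ℤ) * (y j / (l : ℤ) - u j) := by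
      have := hp.1 j
      rcases Int.units_eq_one_or (D.2 j) with h | h
      · rw [h] at this ⊢
        simp only [Units.val_one, one_mul] at this ⊢
        have : ctr m a j / (l : ℤ) ≤ y j / (l : ℤ) := Int.ediv_le_ediv hl' (by linarith)
        rw [h2 j] at this; linarith
      · rw [h] at this ⊢
        simp only [Units.val_neg, Units.val_one, neg_mul, one_mul] at this ⊢
        have : y j / (l : ℤ) ≤ ctr m a j / (l : ℤ) := Int.ediv_le_ediv hl' (by linarith)
        rw [h2 j] at this; linarith
    refine ⟨h3, ?_⟩
    rw [← abs_of_nonneg h3, abs_units_mul]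
    exact hR j
  · have := hp.2
    rcases Int.units_eq_one_or (D.2 D.1) with h | h
    · rw [h] at this ⊢
      simp only [Units.val_one, one_mul] at this ⊢
      have : (ctr m a D.1 + 1 * l) / (l : ℤ) ≤ y D.1 / (l : ℤ) := Int.ediv_le_ediv hl' (by linarith)
      rw [Int.add_mul_ediv_right _ _ hl'.ne', h2] at this
      linarith
    · rw [h] at this ⊢
      simp only [Units.val_neg, Units.val_one, neg_mul, one_mul] at this ⊢
      have : y D.1 / (l : ℤ) ≤ (ctr m a D.1 + (-1) * l) / (l : ℤ) :=
        Int.ediv_le_ediv hl' (by linarith)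
      rw [Int.add_mul_ediv_right _ _ hl'.ne', h2] at this
      linarith

lemma allowed_card {J : ℕ} {D : Dir d} {u : Vtx d} {s : Finset (Vtx d)}
    (hs : ∀ u' ∈ s, Allowed J D u u') : s.card ≤ (J + 1) ^ d := by
  have : s.card ≤ (Finset.Icc (0 : Vtx d) (fun _ => (J : ℤ))).card := by
    refine Finset.card_le_card_of_injOn (fun u' j => (D.2 j : ℤ) * (u' j - u j)) ?_ ?_
    · intro u' hu'
      have := hs u' hu'
      simp only [Finset.coe_Icc, Set.mem_Icc]
      exact ⟨fun j => (this.1 j).1, fun j => (this.1 j).2⟩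
    · intro a _ b _ hab
      funext j
      have := congrFun hab j
      simp only at this
      have h2 : (D.2 j : ℤ) ≠ 0 := Units.ne_zero _
      have := mul_left_cancel₀ h2 this
      linarith
  refine this.trans (le_of_eq ?_)
  rw [Pi.card_Icc]
  simp

/-- Consequence of the directed event `EvE` at a small box. -/
lemma EvE_gives {m n J : ℕ} (hn : 1 ≤ n) {a u : Vtx d} (ha : a ∈ Reg n u 0) {D : Dir d}
    {ω : Config d} (hω : ω ∈ EvE J m ((2 * m + 1) * n) D (ctr m a)) :
    ∃ x ∈ Reg (2 * m + 1) a 0, ∃ u' v', Allowed J D u u' ∧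
      DenseC J ((2 * m + 1) * n) ω u' v' ∧ Conn ω (Reg ((2 * m + 1) * n) u J) x v' := by
  classical
  have hal := fun y hy hp => piece_allowed (m := m) (J := J) hn ha (D := D) (y := y) hy hp
  have hbr := box_sub_reg (m := m) (J := J) hn ha
  obtain ⟨x, hx, hcard⟩ := hω
  set l := (2 * m + 1) * n with hl
  have hl1 : 1 ≤ l := Nat.mul_pos (by omega) hn
  rw [← small_box_eq] at hx
  refine ⟨x, hx, ?_⟩
  set P := (Cl ω (Box (ctr m a) (J * l)) x).filter (fun y => inPiece l D (y - ctr m a)) with hP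
  set f : Vtx d → Vtx d := fun y j => y j / (l : ℤ) with hf
  have hPmem : ∀ y ∈ P, y ∈ Box (ctr m a) (J * l) ∧ Conn ω (Box (ctr m a) (J * l)) x y ∧
      inPiece l D (y - ctr m a) := by
    intro y hy
    obtain ⟨h1, h2⟩ := Finset.mem_filter.1 hy
    exact ⟨(mem_Cl.1 h1).1, (mem_Cl.1 h1).2, h2⟩
  have hfP : ∀ u' ∈ P.image f, Allowed J D u u' := by
    intro u' hu'
    obtain ⟨y, hy, rfl⟩ := Finset.mem_image.1 hu'
    exact hal y (hPmem y hy).1 (hPmem y hy).2.2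
  have hldpos : 0 < l ^ d := Nat.pow_pos hl1
  -- pigeonhole
  obtain ⟨u', hu', hfib⟩ : ∃ u' ∈ P.image f, l ^ d ≤ KK d J * (P.filter (fun y => f y = u')).card := by
    by_contra hcon
    push Not at hcon
    have h1 : ∑ u' ∈ P.image f, KK d J * (P.filter (fun y => f y = u')).card =
        KK d J * P.card := by
      rw [← Finset.mul_sum, ← Finset.card_eq_sum_card_image]
    have h2 : ∑ u' ∈ P.image f, (KK d J * (P.filter (fun y => f y = u')).card + 1) ≤
        (J+1)^d * l ^ d := by
      refine (Finset.sum_le_card_nsmul _ _ (l ^ d) (fun u' hu' => hcon u' hu')).trans ?_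
      rw [smul_eq_mul]
      exact Nat.mul_le_mul_right _ (allowed_card hfP)
    rw [Finset.sum_add_distrib, h1] at h2
    have h3 : (J+1)^d * l ^ d ≤ KK d J * P.card := by
      unfold KK
      calc (J+1)^d * l ^ d ≤ (J+1)^d * (K0 d * P.card) := Nat.mul_le_mul_left _ hcard
        _ = _ := by ring
    have h4 : P.image f ≠ ∅ := by
      intro h
      rw [Finset.image_eq_empty] at h
      rw [h] at hcard
      simp only [Finset.card_empty, mul_zero] at hcard
      omega
    have h5 : 0 < (P.image f).card := Finset.card_pos.2 (Finset.nonempty_iff_ne_empty.2 h4)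
    simp only [Finset.sum_const, smul_eq_mul, mul_one] at h2
    omega
  obtain ⟨v', hv'P, hv'⟩ : ∃ v' ∈ P, f v' = u' := by
    obtain ⟨y, hy, e⟩ := Finset.mem_image.1 hu'
    exact ⟨y, hy, e⟩
  have hAl := hfP u' hu'
  have hsub1 : Box (ctr m a) (J * l) ⊆ Reg l u' (2 * J) :=
    hbr.trans (Reg_sub hl1 (k := J) (fun j => by rw [abs_sub_comm]; exact hAl.abs_le j) (by omega))
  refine ⟨u', v', hAl, ⟨?_, ?_⟩, (hPmem v' hv'P).2.1.monoD hbr⟩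
  · rw [mem_Reg0 hl1]; intro j; exact congrFun hv' j
  · refine hfib.trans (Nat.mul_le_mul_left _ (Finset.card_le_card ?_))
    intro y hy
    obtain ⟨hyP, hyu⟩ := Finset.mem_filter.1 hy
    rw [Finset.mem_inter, mem_Cl]
    refine ⟨⟨hsub1 (hPmem y hyP).1, ?_⟩, ?_⟩
    · exact ((hPmem v' hv'P).2.1.symm.trans (hPmem y hyP).2.1).monoD hsub1
    · rw [mem_Reg0 hl1]; intro j; exact congrFun hyu j

/-- pivotality of small boxes -/
lemma box_pivotal {m n J : ℕ} (hn : 1 ≤ n) {a u : Vtx d} (ha : a ∈ Reg n u 0) {D : Dir d}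
    {ω : Config d} (hω : ω ∈ EvE J m ((2 * m + 1) * n) D (ctr m a)) {v y : Vtx d}
    (hy : y ∈ Reg (2 * m + 1) a 0) (hc : Conn ω (Reg ((2 * m + 1) * n) u (2 * J)) v y) :
    opn (Reg (2 * m + 1) a 0).sym2 ω ∈ FF J ((2 * m + 1) * n) u D v := by
  obtain ⟨x, hx, u', v', h1, h2, h3⟩ := EvE_gives hn ha hω
  have hl1 : 1 ≤ (2 * m + 1) * n := Nat.mul_pos (by omega) hn
  have hle := le_opn (Reg (2 * m + 1) a 0).sym2 ω
  refine ⟨u', v', h1, h2.mono hle, ?_⟩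
  have c1 := hc.mono hle (Reg_mono hl1 u (by omega : 2 * J ≤ 3 * J))
  have c3 := h3.mono hle (Reg_mono hl1 u (by omega : J ≤ 3 * J))
  have c2 : Conn (opn (Reg (2 * m + 1) a 0).sym2 ω) (Reg (2 * m + 1) a 0) y x :=
    conn_of_open (fun e he => opn_mem he) hy hx
  exact c1.trans ((c2.monoD ((smallBox_sub hn ha).trans (Reg_mono hl1 u (Nat.zero_le _)))).trans c3)

/-- A dense cluster touches many small boxes. -/
lemma touch_count {m n J : ℕ} (hn : 1 ≤ n) {u v : Vtx d} {ω : Config d}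
    (h : DenseC J ((2 * m + 1) * n) ω u v) :
    ∃ A ⊆ Reg n u 0, n ^ d ≤ KK d J * A.card ∧ ∀ a ∈ A, ∃ y ∈ Reg (2 * m + 1) a 0,
      Conn ω (Reg ((2 * m + 1) * n) u (2 * J)) v y := by
  classical
  set w := 2 * m + 1 with hw
  have hw1 : 1 ≤ w := by omega
  have hl1 : 1 ≤ w * n := Nat.mul_pos (by omega) hn
  set C := Cl ω (Reg (w * n) u (2 * J)) v ∩ Reg (w * n) u 0 with hC
  set f : Vtx d → Vtx d := fun y j => y j / (w : ℤ) with hf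
  refine ⟨C.image f, ?_, ?_, ?_⟩
  · intro a ha
    obtain ⟨y, hy, rfl⟩ := Finset.mem_image.1 ha
    have := (mem_Reg0 hl1).1 (Finset.mem_inter.1 hy).2
    rw [mem_Reg0 hn]
    intro j
    have := this j
    rw [Nat.cast_mul, ← Int.ediv_ediv_of_nonneg (by positivity)] at this
    exact this
  · have h1 : C.card ≤ w ^ d * (C.image f).card := by
      refine Finset.card_le_mul_card_image (f := f) C (w ^ d) (fun a ha => ?_)
      rw [← card_Reg0 w a]
      refine Finset.card_le_card (fun y hy => ?_)
      rw [mem_Reg0 hw1]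
      intro j
      exact congrFun (Finset.mem_filter.1 hy).2 j
    have h2 : (w * n) ^ d ≤ KK d J * (w ^ d * (C.image f).card) :=
      h.2.trans (Nat.mul_le_mul_left _ h1)
    rw [mul_pow] at h2
    have h3 : 0 < w ^ d := Nat.pow_pos hw1
    refine Nat.le_of_mul_le_mul_left (h2.trans (le_of_eq ?_)) h3
    ring
  · intro a ha
    obtain ⟨y, hy, rfl⟩ := Finset.mem_image.1 ha
    exact ⟨y, (mem_Reg0 hw1).2 (fun j => rfl), (mem_Cl.1 (Finset.mem_inter.1 hy).1).2⟩

end Geometry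


/-! ### Part 8: coarse graining, probabilistic part -/

section Coarse

variable {d : ℕ}

lemma KK_pos (hd : 1 ≤ d) (J : ℕ) : 0 < KK d J :=
  Nat.mul_pos (K0_pos hd) (Nat.pow_pos (by omega))

lemma ind_sum {Ω ι : Type*} (I : Finset ι) (B : ι → Set Ω) (ω : Ω) (P : ι → Prop)
    [DecidablePred P] (hP : ∀ i ∈ I, P i → ω ∈ B i) {T : ℝ}
    (h : T ≤ ((I.filter P).card : ℝ)) :
    T ≤ ∑ i ∈ I, (B i).indicator (fun _ => (1 : ℝ)) ω := by
  classical
  refine h.trans ?_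
  rw [← Finset.sum_boole]
  refine Finset.sum_le_sum (fun i hi => ?_)
  split_ifs with h1
  · rw [Set.indicator_of_mem (hP i hi h1)]
  · exact Set.indicator_nonneg (fun _ _ => zero_le_one) _

lemma opn_det {E : Type*} {S T : Finset E} {F : Set (E → Bool)} (hF : DetBy T F) :
    DetBy T {ω | opn S ω ∈ F} := by
  intro ω ω' hh
  refine hF _ _ (fun e he => ?_)
  by_cases hS : e ∈ S
  · rw [opn_mem hS, opn_mem hS]
  · rw [opn_notMem hS, opn_notMem hS, hh e he]

/-- All dense clusters in the cell `u` can move in direction `D`. -/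
def GoodM (J l : ℕ) (u : Vtx d) (D : Dir d) : Set (Config d) :=
  {ω | ∀ v, DenseC J l ω u v → ω ∈ FF J l u D v}

lemma DenseC_det {J l : ℕ} (hl : 1 ≤ l) (u v : Vtx d) :
    DetBy (Reg l u (3 * J)).sym2 {ω | DenseC J l ω u v} := by
  intro ω ω' hh
  exact DenseC.congr (fun e he => hh e (Finset.sym2_mono (Reg_mono hl u (by omega)) he)) v

lemma GoodM_det {J l : ℕ} (hl : 1 ≤ l) (u : Vtx d) (D : Dir d) :
    DetBy (Reg l u (3 * J)).sym2 (GoodM J l u D) := by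
  intro ω ω' hh
  refine forall_congr' (fun v => ?_)
  have h1 := DenseC_det (J := J) hl u v ω ω' hh
  have h2 := FF_det (J := J) hl u D v ω ω' hh
  exact imp_congr h1 h2

lemma GoodM_prob (hd : 1 ≤ d) {μ : Measure (Config d)} {p : ℝ} (h : Bern μ p) (hp : 0 < p)
    {J m n : ℕ} (hn : 1 ≤ n) {η : ℝ}
    (hη : ∀ D b, μ.real (EvE J m ((2 * m + 1) * n) D b)ᶜ ≤ η) (u : Vtx d) (D : Dir d) :
    μ.real (GoodM J ((2 * m + 1) * n) u D)ᶜ ≤ 2 * KK d J * η +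
      2 * (KK d J) ^ 2 / (p ^ (((2 * m + 1) ^ d + 1).choose 2) * √((n : ℝ) ^ d)) := by
  classical
  haveI := h.prob
  set w := 2 * m + 1 with hw
  set l := w * n with hl
  have hw1 : 1 ≤ w := by omega
  have hl1 : 1 ≤ l := Nat.mul_pos hw1 hn
  set K := KK d J with hK
  have hKpos : 0 < K := KK_pos hd J
  have hKr : (0 : ℝ) < K := by exact_mod_cast hKpos
  set q := p ^ ((w ^ d + 1).choose 2) with hq
  have hq0 : 0 < q := by positivity
  have hNpos : (0 : ℝ) < (n : ℝ) ^ d := by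
    have : (0 : ℝ) < n := by exact_mod_cast hn
    positivity
  set N : ℝ := (n : ℝ) ^ d with hN
  have hNn : ((n ^ d : ℕ) : ℝ) = N := by push_cast; rfl
  set I := Reg n u 0 with hI
  have hIcard : (I.card : ℝ) = N := by rw [hI, card_Reg0, hNn]
  set EE : Vtx d → Set (Config d) := fun a => EvE J m l D (ctr m a) with hEE
  set Okc : Set (Config d) := {ω | n ^ d < 2 * K * (I.filter (fun a => ω ∈ (EE a)ᶜ)).card} with hOkc
  have hEEdet : ∀ a ∈ I, DetBy (Reg l u (3 * J)).sym2 (EE a) := by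
    intro a ha
    refine (EvE_det J m l D (ctr m a)).mono (Finset.sym2_mono ?_)
    exact (box_sub_reg hn ha).trans (Reg_mono hl1 u (by omega))
  have hOkdet : DetBy (Reg l u (3 * J)).sym2 Okc := by
    intro ω ω' hh
    have : I.filter (fun a => ω ∈ (EE a)ᶜ) = I.filter (fun a => ω' ∈ (EE a)ᶜ) :=
      Finset.filter_congr (fun a ha => (hEEdet a ha).compl ω ω' hh)
    simp only [hOkc, Set.mem_setOf_eq, this]
  -- step a
  have ha : μ.real Okc ≤ 2 * K * η := by
    have := countMarkov μ I (fun a => (EE a)ᶜ) (fun a => (EvE_det J m l D (ctr m a)).compl.meas)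
      Okc hOkdet.meas (N / (2 * K)) (by
        intro ω hω
        refine ind_sum _ _ ω (fun a => ω ∈ (EE a)ᶜ) (fun i _ hi => hi) ?_
        rw [div_le_iff₀ (by positivity)]
        have h1 : n ^ d ≤ 2 * K * (I.filter (fun a => ω ∈ (EE a)ᶜ)).card := le_of_lt hω
        have h2 : ((n ^ d : ℕ) : ℝ) ≤ ((2 * K * (I.filter (fun a => ω ∈ (EE a)ᶜ)).card : ℕ) : ℝ) := by
          exact_mod_cast h1
        rw [hNn] at h2
        push_cast at h2
        rw [mul_comm] at h2
        exact h2)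
    have h2 : ∑ a ∈ I, μ.real (EE a)ᶜ ≤ N * η := by
      refine (Finset.sum_le_card_nsmul _ _ η (fun a _ => hη D (ctr m a))).trans ?_
      rw [nsmul_eq_mul, hIcard]
    have h3 : N / (2 * K) * μ.real Okc ≤ N * η := this.trans h2
    have h4 : N * μ.real Okc ≤ N * (2 * K * η) := by
      have e : N * μ.real Okc = (2 * K) * (N / (2 * K) * μ.real Okc) := by field_simp
      rw [e]
      calc (2 * K) * (N / (2 * K) * μ.real Okc) ≤ (2 * K) * (N * η) :=
            mul_le_mul_of_nonneg_left h3 (by positivity)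
        _ = _ := by ring
    exact le_of_mul_le_mul_left h4 hNpos
  -- step b
  set Bad : Vtx d → Set (Config d) :=
    fun v => ({ω | DenseC J l ω u v} \ FF J l u D v) \ Okc with hBad
  have hBaddet : ∀ v, DetBy (Reg l u (3 * J)).sym2 (Bad v) := fun v =>
    ((DenseC_det hl1 u v).diff (FF_det hl1 u D v)).diff hOkdet
  have hb : ∀ v, μ.real (Bad v) ≤ 2 * K / (q * √N) := by
    intro v
    have hFd := FF_det (J := J) hl1 u D v
    have h1 := h.pivotal I (fun a => (Reg w a 0).sym2) (by
        intro a _ b _ hab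
        refine disjoint_sym2 (Finset.disjoint_left.2 (fun y h1 h2 => hab ?_))
        rw [mem_Reg0 hw1] at h1 h2
        funext j
        rw [← h1 j, ← h2 j]) hFd (FF_incr J l u D v) hq0 (by
        intro a _
        rw [Finset.card_sym2, card_Reg0])
    have h2 := countMarkov μ I (fun a => {ω | opn (Reg w a 0).sym2 ω ∈ FF J l u D v} \ FF J l u D v)
      (fun a => ((opn_det hFd).diff hFd).meas) (Bad v) (hBaddet v).meas (N / (2 * K)) (by
        intro ω hω
        refine ind_sum _ _ ω (fun a =>
          ω ∈ {ω | opn (Reg w a 0).sym2 ω ∈ FF J l u D v} \ FF J l u D v) (fun i _ hi => hi) ?_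
        rw [div_le_iff₀ (by positivity)]
        obtain ⟨⟨hDe, hnF⟩, hok⟩ := hω
        obtain ⟨A, hAI, hAc, hA⟩ := touch_count hn hDe
        have hok' : 2 * K * (I.filter (fun a => ω ∈ (EE a)ᶜ)).card ≤ n ^ d := not_lt.1 hok
        have hsub : A ⊆ (I.filter (fun a => ω ∈ (EE a)ᶜ)) ∪ I.filter (fun a =>
            ω ∈ {ω | opn (Reg w a 0).sym2 ω ∈ FF J l u D v} \ FF J l u D v) := by
          intro a ha
          rw [Finset.mem_union, Finset.mem_filter, Finset.mem_filter]
          by_cases hE : ω ∈ EE a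
          · right
            obtain ⟨y, hy, hc⟩ := hA a ha
            exact ⟨hAI ha, box_pivotal hn (hAI ha) hE hy hc, hnF⟩
          · left; exact ⟨hAI ha, hE⟩
        have h3 := (Finset.card_le_card hsub).trans (Finset.card_union_le _ _)
        have h4 : n ^ d ≤ (I.filter (fun a =>
            ω ∈ {ω | opn (Reg w a 0).sym2 ω ∈ FF J l u D v} \ FF J l u D v)).card * (2 * K) := by
          have := Nat.mul_le_mul_left (2 * K) h3
          have e : n ^ d ≤ K * A.card := hAc
          nlinarith
        have h5 : ((n ^ d : ℕ) : ℝ) ≤ (((I.filter (fun a =>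
            ω ∈ {ω | opn (Reg w a 0).sym2 ω ∈ FF J l u D v} \ FF J l u D v)).card * (2 * K) : ℕ) : ℝ) := by
          exact_mod_cast h4
        rw [hNn] at h5
        push_cast at h5
        exact h5)
    have h3 := h2.trans h1
    rw [hIcard] at h3
    have hsN : 0 < √N := Real.sqrt_pos.2 hNpos
    have hss : √N * √N = N := Real.mul_self_sqrt hNpos.le
    rw [le_div_iff₀ (by positivity)]
    rw [le_div_iff₀ hq0] at h3
    have h4 : √N * (μ.real (Bad v) * (q * √N)) ≤ √N * (2 * K) := by
      calc √N * (μ.real (Bad v) * (q * √N)) = (2 * K) * ((√N * √N) / (2 * K) * μ.real (Bad v) * q) := by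
            field_simp
        _ ≤ (2 * K) * √N := by rw [hss]; exact mul_le_mul_of_nonneg_left h3 (by positivity)
        _ = _ := by ring
    exact le_of_mul_le_mul_left h4 hsN
  -- step c
  set W : Set (Config d) := ⋃ v, Bad v with hW
  have hWdet : DetBy (Reg l u (3 * J)).sym2 W := DetBy.iUnion hBaddet
  have hldpos : (0 : ℝ) < (l : ℝ) ^ d := by
    have : (0 : ℝ) < l := by exact_mod_cast hl1
    positivity
  have hc : μ.real W ≤ 2 * K ^ 2 / (q * √N) := by
    have h1 := countMarkov μ (Reg l u 0) Bad (fun v => (hBaddet v).meas) W hWdet.meas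
      ((l : ℝ) ^ d / K) (by
        intro ω hω
        refine ind_sum _ _ ω (fun i => ω ∈ Bad i) (fun i _ hi => hi) ?_
        rw [div_le_iff₀ hKr]
        obtain ⟨v, ⟨hDe, hnF⟩, hok⟩ := Set.mem_iUnion.1 hω
        have hsub : Cl ω (Reg l u (2 * J)) v ∩ Reg l u 0 ⊆
            (Reg l u 0).filter (fun i => ω ∈ Bad i) := by
          intro v' hv'
          obtain ⟨h1, h2⟩ := Finset.mem_inter.1 hv'
          have hcon := (mem_Cl.1 h1).2
          rw [Finset.mem_filter]
          refine ⟨h2, ⟨DenseC.of_conn hDe h2 hcon, ?_⟩, hok⟩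
          rintro ⟨u', v'', g1, g2, g3⟩
          exact hnF ⟨u', v'', g1, g2, (hcon.monoD (Reg_mono hl1 u (by omega))).trans g3⟩
        have h2 : l ^ d ≤ K * _ := hDe.2.trans (Nat.mul_le_mul_left K (Finset.card_le_card hsub))
        have h3 : ((l ^ d : ℕ) : ℝ) ≤ _ := Nat.cast_le.2 h2
        push_cast at h3
        rw [mul_comm] at h3
        exact h3)
    have h2 : ∑ v ∈ Reg l u 0, μ.real (Bad v) ≤ (l : ℝ) ^ d * (2 * K / (q * √N)) := by
      refine (Finset.sum_le_card_nsmul _ _ _ (fun v _ => hb v)).trans ?_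
      rw [nsmul_eq_mul, card_Reg0]
      push_cast
      exact le_rfl
    have h3 := h1.trans h2
    have h4 : (l : ℝ) ^ d * μ.real W ≤ (l : ℝ) ^ d * (2 * K ^ 2 / (q * √N)) := by
      calc (l : ℝ) ^ d * μ.real W = K * ((l : ℝ) ^ d / K * μ.real W) := by field_simp
        _ ≤ K * ((l : ℝ) ^ d * (2 * K / (q * √N))) := mul_le_mul_of_nonneg_left h3 hKr.le
        _ = _ := by ring
    exact le_of_mul_le_mul_left h4 hldpos
  have hsub : (GoodM J l u D)ᶜ ⊆ Okc ∪ W := by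
    intro ω hω
    simp only [GoodM, Set.mem_compl_iff, Set.mem_setOf_eq, not_forall] at hω
    obtain ⟨v, hv, hnv⟩ := hω
    by_cases hok : ω ∈ Okc
    · left; exact hok
    · right; exact Set.mem_iUnion.2 ⟨v, ⟨hv, hnv⟩, hok⟩
  calc μ.real (GoodM J l u D)ᶜ ≤ μ.real (Okc ∪ W) := measureReal_mono hsub
    _ ≤ μ.real Okc + μ.real W := measureReal_union_le _ _
    _ ≤ _ := add_le_add ha hc

/-- There is a dense cluster near the cell `u`. -/
def NearD (J l : ℕ) (u : Vtx d) : Set (Config d) :=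
  {ω | ∃ u' v', (∀ j, |u' j - u j| ≤ J) ∧ DenseC J l ω u' v'}

lemma NearD_det {J l : ℕ} (hl : 1 ≤ l) (u : Vtx d) :
    DetBy (Reg l u (4 * J)).sym2 (NearD J l u) := by
  intro ω ω' hh
  refine exists_congr (fun u' => exists_congr (fun v' => and_congr_right (fun h => ?_)))
  exact DenseC.congr (fun e he => hh e (Finset.sym2_mono (Reg_sub hl (k := J) h (by omega)) he)) v'

lemma coarse (hd : 1 ≤ d) {μ : Measure (Config d)} {p : ℝ} (h : Bern μ p) (hp : 0 < p)
    {c1 δ : ℝ} (hc1 : 0 < c1) (hδ : 0 < δ) (hA : ∀ n, δ ≤ μ.real (VolA c1 n 0)) :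
    ∃ J, 1 ≤ J ∧ ∀ ε > 0, ∃ l, 1 ≤ l ∧ (∀ u D, μ.real (GoodM J l u D : Set (Config d))ᶜ ≤ ε) ∧
      ∀ u, μ.real (NearD J l u : Set (Config d))ᶜ ≤ ε := by
  haveI := h.prob
  obtain ⟨J, hJ, hE⟩ := EvE_prob hd h hc1 hδ hA
  refine ⟨J, hJ, fun ε hε => ?_⟩
  have hK1 : (1 : ℝ) ≤ KK d J := by exact_mod_cast KK_pos hd J
  set K : ℝ := ((KK d J : ℕ) : ℝ) with hK
  obtain ⟨m, hm⟩ := hE (ε / (4 * K)) (by positivity)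
  set q := p ^ (((2 * m + 1) ^ d + 1).choose 2) with hq
  have hq0 : 0 < q := by positivity
  obtain ⟨n, hn⟩ := exists_nat_ge ((4 * K ^ 2 / (q * ε)) ^ 2 + 1)
  have hn1' : (1 : ℝ) ≤ n := by linarith [sq_nonneg (4 * K ^ 2 / (q * ε))]
  have hn1 : 1 ≤ n := by exact_mod_cast hn1'
  have hl1 : 1 ≤ (2 * m + 1) * n := Nat.mul_pos (by omega) hn1
  have hη := hm ((2 * m + 1) * n) (by nlinarith) hl1
  refine ⟨(2 * m + 1) * n, hl1, fun u D => ?_, fun u => ?_⟩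
  · refine (GoodM_prob hd h hp hn1 hη u D).trans ?_
    rw [← hq, ← hK]
    have h1 : 4 * K ^ 2 / (q * ε) ≤ √((n : ℝ) ^ d) := by
      apply Real.le_sqrt_of_sq_le
      have : (n : ℝ) ≤ (n : ℝ) ^ d := le_self_pow₀ hn1' (by omega)
      linarith
    have h2 : 2 * K ^ 2 / (q * √((n : ℝ) ^ d)) ≤ ε / 2 := by
      have hs : 0 < √((n : ℝ) ^ d) := lt_of_lt_of_le (by positivity) h1
      rw [div_le_iff₀ (by positivity)] at h1 ⊢
      linarith
    have h3 : 2 * K * (ε / (4 * K)) = ε / 2 := by field_simp; norm_num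
    linarith
  · set a : Vtx d := fun j => (n : ℤ) * u j with ha
    have hai : a ∈ Reg n u 0 := by
      rw [mem_Reg0 hn1]
      intro j
      rw [ha]
      exact Int.mul_ediv_cancel_left _ (by exact_mod_cast (by omega : n ≠ 0))
    have hsub : (NearD J ((2 * m + 1) * n) u)ᶜ ⊆
        (EvE J m ((2 * m + 1) * n) (⟨0, hd⟩, fun _ => 1) (ctr m a))ᶜ := by
      rw [Set.compl_subset_compl]
      intro ω hω
      obtain ⟨x, _, u', v', h1, h2, _⟩ := EvE_gives hn1 hai hω
      exact ⟨u', v', h1.abs_le, h2⟩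
    refine (measureReal_mono hsub).trans ((hη _ _).trans ?_)
    rw [div_le_iff₀ (by positivity)]
    nlinarith

end Coarse


/-! ### Part 9: good sites and tracking -/

section Sites

variable {d : ℕ}

/-- Good coarse sites. -/
def GoodS (J l : ℕ) (z : Vtx d) : Set (Config d) :=
  {ω | (∀ u : Vtx d, (∀ j, |u j - z j| ≤ (J + 1 : ℕ)) → ∀ D, ω ∈ GoodM J l u D) ∧ ω ∈ NearD J l z}

lemma GoodS_det {J l : ℕ} (hl : 1 ≤ l) (hJ : 1 ≤ J) (z : Vtx d) :
    DetBy (Reg l z (5 * J)).sym2 (GoodS J l z) := by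
  intro ω ω' hh
  refine and_congr ?_ ?_
  · refine forall_congr' (fun u => forall_congr' (fun h => forall_congr' (fun D => ?_)))
    exact GoodM_det hl u D ω ω'
      (fun e he => hh e (Finset.sym2_mono (Reg_sub hl (k := J + 1) h (by omega)) he))
  · exact NearD_det hl z ω ω'
      (fun e he => hh e (Finset.sym2_mono (Reg_mono hl z (by omega)) he))

lemma GoodS_prob {μ : Measure (Config d)} [IsProbabilityMeasure μ] {J l : ℕ} {ε : ℝ}
    (h1 : ∀ u D, μ.real (GoodM J l u D : Set (Config d))ᶜ ≤ ε)
    (h2 : ∀ u, μ.real (NearD J l u : Set (Config d))ᶜ ≤ ε) (z : Vtx d) :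
    μ.real (GoodS J l z)ᶜ ≤ ((2 * (J + 1) + 1) ^ d * K0 d + 1 : ℕ) * ε := by
  classical
  have hsub : (GoodS J l z)ᶜ ⊆ (⋃ x ∈ (Box z (J + 1)) ×ˢ (Finset.univ : Finset (Dir d)),
      (GoodM J l x.1 x.2)ᶜ) ∪ (NearD J l z)ᶜ := by
    intro ω hω
    by_cases hn : ω ∈ NearD J l z
    · left
      by_contra hcon
      refine hω ⟨fun u hu D => ?_, hn⟩
      by_contra hD
      refine hcon (Set.mem_biUnion (x := (u, D)) ?_ hD)
      simp [mem_Box]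
      exact_mod_cast hu
    · right; exact hn
  refine (measureReal_mono hsub).trans ((measureReal_union_le _ _).trans ?_)
  have h3 := (measureReal_biUnion_finset_le (μ := μ) ((Box z (J + 1)) ×ˢ (Finset.univ : Finset (Dir d)))
    (fun x => (GoodM J l x.1 x.2)ᶜ)).trans
      (Finset.sum_le_card_nsmul _ _ ε (fun x _ => h1 x.1 x.2))
  rw [Finset.card_product, card_Box, Finset.card_univ, nsmul_eq_mul] at h3
  have h4 := h2 z
  have e : Fintype.card (Dir d) = K0 d := rfl
  rw [e] at h3
  push_cast at h3 ⊢
  linarith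

/-- translation vector -/
def tv (l : ℕ) (z : Vtx d) : Vtx d := fun j => (l : ℤ) * z j

lemma Reg_map_tr (l : ℕ) (z u : Vtx d) (r : ℕ) :
    (Reg l u r).map (trE (tv l z)).toEmbedding = Reg l (u + z) r := by
  ext y
  rw [Finset.mem_map_equiv]
  have : (trE (tv l z)).symm y = y - tv l z := by
    rw [Equiv.symm_apply_eq, trE_apply, sub_add_cancel]
  rw [this]
  unfold Reg tv
  rw [Finset.mem_Icc, Finset.mem_Icc, Pi.le_def, Pi.le_def, Pi.le_def, Pi.le_def]
  simp only [Pi.sub_apply, Pi.add_apply]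
  refine and_congr (forall_congr' fun j => ?_) (forall_congr' fun j => ?_)
  · constructor <;> intro h <;> linarith
  · constructor <;> intro h <;> linarith

lemma DenseC_tr (J l : ℕ) (ω : Config d) (z u v : Vtx d) :
    DenseC J l (fun e => ω (Sym2.map (trE (tv l z)) e)) u v ↔ DenseC J l ω (u + z) (v + tv l z) := by
  classical
  unfold DenseC
  rw [← Reg_map_tr l z u 0, ← Reg_map_tr l z u (2 * J), ← trE_apply,
    ← Cl_map (trE (tv l z)) (trE_adj _) ω, ← Finset.map_inter, Finset.card_map]
  simp

lemma FF_tr (J l : ℕ) (ω : Config d) (z u : Vtx d) (D : Dir d) (v : Vtx d) :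
    (fun e => ω (Sym2.map (trE (tv l z)) e)) ∈ FF J l u D v ↔
      ω ∈ FF J l (u + z) D (v + tv l z) := by
  have hA : ∀ u', Allowed J D u u' ↔ Allowed J D (u + z) (u' + z) := by
    intro u'
    unfold Allowed
    simp
  have hC : ∀ v', Conn (fun e => ω (Sym2.map (trE (tv l z)) e)) (Reg l u (3 * J)) v v' ↔
      Conn ω (Reg l (u + z) (3 * J)) (v + tv l z) (v' + tv l z) := by
    intro v'
    rw [← Reg_map_tr, ← trE_apply, ← trE_apply, Conn.map (trE (tv l z)) (trE_adj _) ω]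
  constructor
  · rintro ⟨u', v', h1, h2, h3⟩
    exact ⟨u' + z, v' + tv l z, (hA u').1 h1, (DenseC_tr J l ω z u' v').1 h2, (hC v').1 h3⟩
  · rintro ⟨u', v', h1, h2, h3⟩
    refine ⟨u' - z, v' - tv l z, (hA _).2 ?_, (DenseC_tr J l ω z _ _).2 ?_, (hC _).2 ?_⟩
    · rwa [sub_add_cancel]
    · rwa [sub_add_cancel, sub_add_cancel]
    · rwa [sub_add_cancel]

lemma GoodS_tr (J l : ℕ) (z : Vtx d) :
    GoodS J l z = {ω | (fun e => ω (Sym2.map (trE (tv l z)) e)) ∈ GoodS J l 0} := by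
  ext ω
  have hM : ∀ u D, (fun e => ω (Sym2.map (trE (tv l z)) e)) ∈ GoodM J l u D ↔
      ω ∈ GoodM J l (u + z) D := by
    intro u D
    constructor
    · intro h v hv
      have := h (v - tv l z) ((DenseC_tr J l ω z u _).2 (by rwa [sub_add_cancel]))
      rw [FF_tr, sub_add_cancel] at this
      exact this
    · intro h v hv
      rw [FF_tr]
      exact h _ ((DenseC_tr J l ω z u v).1 hv)
  refine and_congr ?_ ?_
  · constructor
    · intro h u hu D
      rw [hM]
      exact h (u + z) (fun j => by simpa using hu j) D
    · intro h u hu D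
      have := h (u - z) (fun j => by simpa using hu j) D
      rw [hM, sub_add_cancel] at this
      exact this
  · constructor
    · rintro ⟨u, v, h1, h2⟩
      exact ⟨u - z, v - tv l z, fun j => by simpa using h1 j, (DenseC_tr J l ω z _ _).2 (by
        rwa [sub_add_cancel, sub_add_cancel])⟩
    · rintro ⟨u, v, h1, h2⟩
      exact ⟨u + z, v + tv l z, fun j => by simpa using h1 j, (DenseC_tr J l ω z _ _).1 h2⟩

lemma GoodS_real {μ : Measure (Config d)} {p : ℝ} (h : Bern μ p) {J l : ℕ} (hl : 1 ≤ l)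
    (hJ : 1 ≤ J) (z : Vtx d) : μ.real (GoodS J l z)ᶜ = μ.real (GoodS J l (0 : Vtx d))ᶜ := by
  haveI := h.prob
  have : μ.real (GoodS J l z) = μ.real (GoodS J l (0 : Vtx d)) := by
    rw [GoodS_tr J l z, h.real_preimage _ (sym2map_inj _) (GoodS_det hl hJ 0).meas]
  rw [measureReal_compl (GoodS_det hl hJ z).meas, measureReal_compl (GoodS_det hl hJ 0).meas, this]

open Classical in
lemma track_step {J l : ℕ} (hJ : 1 ≤ J) {ω : Config d} {z : Vtx d} (hg : ω ∈ GoodS J l z) :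
    ∀ (k : ℕ) (u v : Vtx d), (Finset.univ.filter (fun j => (J : ℤ) < |u j - z j|)).card ≤ k →
      (∀ j, |u j - z j| ≤ (J + 1 : ℕ)) → DenseC J l ω u v →
      ∃ u' v', (∀ j, |u' j - z j| ≤ J) ∧ DenseC J l ω u' v' ∧
        Relation.ReflTransGen (openAdj ω) v v' := by
  intro k
  induction k with
  | zero =>
    intro u v hk _ hd
    refine ⟨u, v, fun j => ?_, hd, Relation.ReflTransGen.refl⟩
    have h0 := Finset.card_eq_zero.1 (Nat.le_zero.1 hk)
    by_contra hj
    have : j ∈ Finset.univ.filter (fun j => (J : ℤ) < |u j - z j|) := by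
      simp only [Finset.mem_filter, Finset.mem_univ, true_and]; exact not_le.1 hj
    rw [h0] at this
    exact absurd this (Finset.notMem_empty _)
  | succ k ih =>
    intro u v hk hu hd
    by_cases hall : ∀ j, |u j - z j| ≤ J
    · exact ⟨u, v, hall, hd, Relation.ReflTransGen.refl⟩
    · push Not at hall
      obtain ⟨i, hi⟩ := hall
      set s : Fin d → ℤˣ := fun j => if z j ≤ u j then -1 else 1 with hs
      obtain ⟨u', v', hA, hd', hc⟩ := hg.1 u hu (i, s) v hd
      have hcase : ∀ j, (z j ≤ u j ∧ u j - J ≤ u' j ∧ u' j ≤ u j) ∨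
          (u j < z j ∧ u j ≤ u' j ∧ u' j ≤ u j + J) := by
        intro j
        have := hA.1 j
        by_cases hz : z j ≤ u j
        · left
          have e : s j = -1 := by simp [hs, hz]
          simp only [e, Units.val_neg, Units.val_one] at this
          refine ⟨hz, by linarith [this.2], by linarith [this.1]⟩
        · right
          have e : s j = 1 := by simp [hs, hz]
          simp only [e, Units.val_one] at this
          exact ⟨by linarith, by linarith [this.1], by linarith [this.2]⟩
      have hcard : ∀ j, |u' j - z j| ≤ max (J : ℤ) |u j - z j| := by
        intro j
        rw [le_max_iff, abs_le, abs_le]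
        rcases hcase j with ⟨a, b, c⟩ | ⟨a, b, c⟩
        · rw [abs_of_nonneg (by linarith : 0 ≤ u j - z j)]
          by_cases h : z j ≤ u' j
          · right; constructor <;> linarith
          · left; constructor <;> linarith
        · rw [abs_of_neg (by linarith : u j - z j < 0)]
          by_cases h : u' j ≤ z j
          · right; constructor <;> linarith
          · left; constructor <;> linarith
      have hii : |u' i - z i| ≤ J := by
        have h1 := hA.2
        have hui := hu i
        have hJ' : (1 : ℤ) ≤ J := by exact_mod_cast hJ
        push_cast at hui
        by_cases hz : z i ≤ u i
        · have e : s i = -1 := by simp [hs, hz]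
          simp only [e, Units.val_neg, Units.val_one] at h1
          rw [abs_of_nonneg (by linarith : 0 ≤ u i - z i)] at hui hi
          rcases hcase i with ⟨a, b, c⟩ | ⟨a, b, c⟩
          · rw [abs_le]; constructor <;> linarith
          · linarith
        · have e : s i = 1 := by simp [hs, hz]
          simp only [e, Units.val_one] at h1
          rw [abs_of_neg (by linarith : u i - z i < 0)] at hui hi
          rcases hcase i with ⟨a, b, c⟩ | ⟨a, b, c⟩
          · linarith
          · rw [abs_le]; constructor <;> linarith
      have hsub : Finset.univ.filter (fun j => (J : ℤ) < |u' j - z j|) ⊆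
          (Finset.univ.filter (fun j => (J : ℤ) < |u j - z j|)).erase i := by
        intro j hj
        simp only [Finset.mem_filter, Finset.mem_univ, true_and] at hj
        rw [Finset.mem_erase]
        simp only [Finset.mem_filter, Finset.mem_univ, true_and]
        refine ⟨fun h => ?_, ?_⟩
        · subst h; linarith
        · rcases le_max_iff.1 (hcard j) with h | h <;> linarith
      have hmem : i ∈ Finset.univ.filter (fun j => (J : ℤ) < |u j - z j|) := by
        simp only [Finset.mem_filter, Finset.mem_univ, true_and]; exact hi
      have hc1 := Finset.card_le_card hsub
      rw [Finset.card_erase_of_mem hmem] at hc1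
      obtain ⟨u'', v'', g1, g2, g3⟩ := ih u' v' (by omega) (fun j => by
        refine (hcard j).trans (max_le ?_ (hu j))
        push_cast; linarith) hd'
      exact ⟨u'', v'', g1, g2, hc.global.trans g3⟩

lemma tracker (hd : 1 ≤ d) {J l : ℕ} (hl : 1 ≤ l) (hJ : 1 ≤ J) {ω : Config d} (z : ℕ → Vtx d)
    (hz : ∀ k j, |z k j - z (k + 1) j| ≤ 1) (hz0 : ∀ k, z k ⟨0, hd⟩ = k)
    (hg : ∀ k, ω ∈ GoodS J l (z k)) :
    ∃ v, {x | Relation.ReflTransGen (openAdj ω) v x}.Infinite := by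
  classical
  obtain ⟨u0, v0, hu0, hd0⟩ := (hg 0).2
  refine ⟨v0, ?_⟩
  have key : ∀ k, ∃ u v, (∀ j, |u j - z k j| ≤ J) ∧ DenseC J l ω u v ∧
      Relation.ReflTransGen (openAdj ω) v0 v := by
    intro k
    induction k with
    | zero => exact ⟨u0, v0, hu0, hd0, Relation.ReflTransGen.refl⟩
    | succ k ih =>
      obtain ⟨u, v, h1, h2, h3⟩ := ih
      obtain ⟨u', v', g1, g2, g3⟩ := track_step hJ (hg (k + 1)) _ u v le_rfl (fun j => by
        have a := abs_sub_le (u j) (z k j) (z (k + 1) j)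
        have := h1 j
        have := hz k j
        push_cast
        linarith) h2
      exact ⟨u', v', g1, g2, h3.trans g3⟩
  intro hfin
  obtain ⟨M, hM⟩ := (hfin.image (fun x : Vtx d => x ⟨0, hd⟩)).bddAbove
  obtain ⟨u, v, h1, h2, h3⟩ := key (M.toNat + J + 1)
  have hv : v ⟨0, hd⟩ ≤ M := hM ⟨v, h3, rfl⟩
  have e1 := (abs_le.1 (h1 ⟨0, hd⟩)).1
  rw [hz0] at e1
  have e2 := (mem_Reg0 hl).1 h2.1 ⟨0, hd⟩
  have hl' : (1 : ℤ) ≤ l := by exact_mod_cast hl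
  have e3 : u ⟨0, hd⟩ ≤ v ⟨0, hd⟩ / (l : ℤ) := e2.ge
  rw [Int.le_ediv_iff_mul_le (by linarith)] at e3
  have e4 : (M.toNat : ℤ) ≥ M := Int.self_le_toNat M
  have e5 : (0 : ℤ) ≤ M.toNat := by positivity
  push_cast at e1
  nlinarith

end Sites


/-! ### Part 10: Lipschitz percolation -/

section Lipschitz

/-- Sites reachable by admissible paths. -/
inductive Rch (B : ℤ × ℤ → Prop) : ℤ → ℤ → Prop
  | base (x y : ℤ) (h : y ≤ 0) : Rch B x y
  | up (x y : ℤ) (h : Rch B x y) (hb : B (x, y + 1)) : Rch B x (y + 1)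
  | left (x y : ℤ) (h : Rch B x y) : Rch B (x - 1) (y - 1)
  | right (x y : ℤ) (h : Rch B x y) : Rch B (x + 1) (y - 1)

lemma lip_det {B : ℤ × ℤ → Prop} (h : ∀ x, ∃ n : ℕ, ¬ Rch B x n) :
    ∃ F : ℤ → ℤ, (∀ x, |F x - F (x + 1)| ≤ 1) ∧ ∀ x, ¬ B (x, F x) := by
  classical
  set G : ℤ → ℕ := fun x => Nat.find (h x) with hG
  have hG1 : ∀ x, ¬ Rch B x (G x) := fun x => Nat.find_spec (h x)
  have hG2 : ∀ x (y : ℤ), y < G x → Rch B x y := by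
    intro x y hy
    by_cases h0 : y ≤ 0
    · exact Rch.base x y h0
    · push Not at h0
      obtain ⟨k, rfl⟩ := Int.eq_ofNat_of_zero_le h0.le
      have := Nat.find_min (h x) (m := k) (by exact_mod_cast hy)
      exact not_not.1 this
  refine ⟨fun x => (G x : ℤ), fun x => ?_, fun x hb => ?_⟩
  · rw [abs_le]
    constructor
    · by_contra hcon
      push Not at hcon
      have h1 := Rch.left (x + 1) (G x + 1) (hG2 (x + 1) (G x + 1) (by linarith))
      simp only [add_sub_cancel_right] at h1
      exact hG1 x h1
    · by_contra hcon
      push Not at hcon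
      have h1 := Rch.right x (G (x + 1) + 1) (hG2 x (G (x + 1) + 1) (by linarith))
      simp only [add_sub_cancel_right] at h1
      exact hG1 (x + 1) h1
  · have h1 := Rch.up x (G x - 1) (hG2 x (G x - 1) (by linarith)) (by simpa using hb)
    simp only [sub_add_cancel] at h1
    exact hG1 x h1

/-- reversed steps -/
def nxt : Fin 3 → ℤ × ℤ → ℤ × ℤ
  | 0, a => (a.1, a.2 - 1)
  | 1, a => (a.1 + 1, a.2 + 1)
  | 2, a => (a.1 - 1, a.2 + 1)

def pathVerts : ℤ × ℤ → List (Fin 3) → List (ℤ × ℤ)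
  | a, [] => [a]
  | a, i :: s => a :: pathVerts (nxt i a) s

def pathDowns : ℤ × ℤ → List (Fin 3) → List (ℤ × ℤ)
  | _, [] => []
  | a, i :: s => if i = 0 then a :: pathDowns (nxt i a) s else pathDowns (nxt i a) s

def pathEnd : ℤ × ℤ → List (Fin 3) → ℤ × ℤ
  | a, [] => a
  | a, i :: s => pathEnd (nxt i a) s

lemma downs_sublist (s : List (Fin 3)) : ∀ a, (pathDowns a s).Sublist (pathVerts a s) := by
  induction s with
  | nil => intro a; simp [pathDowns]
  | cons i s ih =>
    intro a
    simp only [pathDowns, pathVerts]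
    split_ifs
    · exact (ih _).cons_cons a
    · exact (ih _).cons a

lemma path_height (s : List (Fin 3)) : ∀ a,
    (pathEnd a s).2 = a.2 + s.length - 2 * (pathDowns a s).length := by
  induction s with
  | nil => intro a; simp [pathEnd, pathDowns]
  | cons i s ih =>
    intro a
    simp only [pathDowns, pathEnd]
    rw [ih]
    fin_cases i <;> simp [nxt] <;> ring

lemma path_suffix (s : List (Fin 3)) : ∀ a b, b ∈ pathVerts a s →
    ∃ t, (pathVerts b t).Sublist (pathVerts a s) ∧ (∀ w ∈ pathDowns b t, w ∈ pathDowns a s) ∧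
      pathEnd b t = pathEnd a s := by
  induction s with
  | nil =>
    intro a b hb
    simp only [pathVerts, List.mem_singleton] at hb
    subst hb
    exact ⟨[], List.Sublist.refl _, fun w h => h, rfl⟩
  | cons i s ih =>
    intro a b hb
    simp only [pathVerts, List.mem_cons] at hb
    rcases hb with rfl | hb
    · exact ⟨i :: s, List.Sublist.refl _, fun w h => h, rfl⟩
    · obtain ⟨t, h1, h2, h3⟩ := ih _ _ hb
      refine ⟨t, h1.cons a, fun w hw => ?_, h3⟩
      simp only [pathDowns]
      split_ifs
      · exact List.mem_cons_of_mem _ (h2 w hw)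
      · exact h2 w hw

def HasPath (B : ℤ × ℤ → Prop) (z : ℤ × ℤ) : Prop :=
  ∃ s, (pathVerts z s).Nodup ∧ (∀ w ∈ pathDowns z s, B w) ∧ (pathEnd z s).2 ≤ 0

lemma HasPath.step {B : ℤ × ℤ → Prop} {z : ℤ × ℤ} (i : Fin 3) (h : HasPath B (nxt i z))
    (hi : i = 0 → B z) : HasPath B z := by
  obtain ⟨s, h1, h2, h3⟩ := h
  by_cases hz : z ∈ pathVerts (nxt i z) s
  · obtain ⟨t, g1, g2, g3⟩ := path_suffix s _ _ hz
    exact ⟨t, h1.sublist g1, fun w hw => h2 w (g2 w hw), by rw [g3]; exact h3⟩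
  · refine ⟨i :: s, ?_, ?_, h3⟩
    · simp only [pathVerts]
      exact List.nodup_cons.2 ⟨hz, h1⟩
    · intro w hw
      simp only [pathDowns] at hw
      split_ifs at hw with h0
      · rcases List.mem_cons.1 hw with rfl | hw
        · exact hi h0
        · exact h2 w hw
      · exact h2 w hw

lemma Rch.hasPath {B : ℤ × ℤ → Prop} {x y : ℤ} (h : Rch B x y) : HasPath B (x, y) := by
  induction h with
  | base x y h => exact ⟨[], by simp [pathVerts], by simp [pathDowns], h⟩
  | up x y h hb ih =>
    refine HasPath.step 0 ?_ (fun _ => hb)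
    simpa [nxt] using ih
  | left x y h ih =>
    refine HasPath.step 1 ?_ (by simp)
    simpa [nxt] using ih
  | right x y h ih =>
    refine HasPath.step 2 ?_ (by simp)
    simpa [nxt] using ih

open ENNReal in
lemma rch_prob {Ω : Type*} [MeasurableSpace Ω] (μ : Measure Ω) (Bad : ℤ × ℤ → Set Ω)
    (h : ∀ S : Finset (ℤ × ℤ), μ (⋂ z ∈ S, Bad z) ≤ ((4 : ℝ≥0∞)⁻¹) ^ (2 * S.card)) (x : ℤ) (n : ℕ) :
    μ {ω | Rch (fun z => ω ∈ Bad z) x n} ≤ ((4 : ℝ≥0∞)⁻¹) ^ n * (1 - 3 * (4 : ℝ≥0∞)⁻¹)⁻¹ := by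
  classical
  have hsub : {ω | Rch (fun z => ω ∈ Bad z) x n} ⊆
      ⋃ T : ℕ, ⋃ f : Fin T → Fin 3, {ω | (pathDowns (x, (n : ℤ)) (List.ofFn f)).Nodup ∧
        n + T ≤ 2 * (pathDowns (x, (n : ℤ)) (List.ofFn f)).length ∧
        ∀ w ∈ pathDowns (x, (n : ℤ)) (List.ofFn f), ω ∈ Bad w} := by
    intro ω hω
    obtain ⟨s, h1, h2, h3⟩ := Rch.hasPath hω
    refine Set.mem_iUnion.2 ⟨s.length, Set.mem_iUnion.2 ⟨s.get, ?_⟩⟩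
    have e : List.ofFn s.get = s := List.ofFn_get s
    rw [Set.mem_setOf_eq, e]
    refine ⟨h1.sublist (downs_sublist s _), ?_, h2⟩
    rw [path_height] at h3
    simp only at h3
    omega
  have hf : ∀ (T : ℕ) (f : Fin T → Fin 3), μ {ω | (pathDowns (x, (n : ℤ)) (List.ofFn f)).Nodup ∧
        n + T ≤ 2 * (pathDowns (x, (n : ℤ)) (List.ofFn f)).length ∧
        ∀ w ∈ pathDowns (x, (n : ℤ)) (List.ofFn f), ω ∈ Bad w} ≤ ((4 : ℝ≥0∞)⁻¹) ^ (n + T) := by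
    intro T f
    set L := pathDowns (x, (n : ℤ)) (List.ofFn f) with hL
    by_cases hc : L.Nodup ∧ n + T ≤ 2 * L.length
    · calc _ ≤ μ (⋂ z ∈ L.toFinset, Bad z) := by
            refine measure_mono ?_
            rintro ω ⟨_, _, h3⟩
            simpa using h3
        _ ≤ ((4 : ℝ≥0∞)⁻¹) ^ (2 * L.toFinset.card) := h _
        _ ≤ _ := by
            rw [List.toFinset_card_of_nodup hc.1]
            exact pow_le_pow_of_le_one (zero_le) (by simp) hc.2
    · have : {ω : Ω | L.Nodup ∧ n + T ≤ 2 * L.length ∧ ∀ w ∈ L, ω ∈ Bad w} = ∅ := by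
        ext ω
        simp only [Set.mem_setOf_eq, Set.mem_empty_iff_false, iff_false]
        rintro ⟨a, b, _⟩
        exact hc ⟨a, b⟩
      rw [this, measure_empty]
      exact zero_le
  calc μ {ω | Rch (fun z => ω ∈ Bad z) x n} ≤ _ := measure_mono hsub
    _ ≤ ∑' T : ℕ, μ (⋃ f : Fin T → Fin 3, _) := measure_iUnion_le _
    _ ≤ ∑' T : ℕ, ((4 : ℝ≥0∞)⁻¹) ^ n * (3 * (4 : ℝ≥0∞)⁻¹) ^ T := by
        refine ENNReal.tsum_le_tsum (fun T => ?_)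
        refine (measure_iUnion_le _).trans ?_
        rw [tsum_fintype]
        refine (Finset.sum_le_card_nsmul _ _ _ (fun f _ => hf T f)).trans (le_of_eq ?_)
        rw [Finset.card_univ, Fintype.card_fun, Fintype.card_fin, Fintype.card_fin, nsmul_eq_mul,
          pow_add, mul_pow]
        push_cast
        ring
    _ = _ := by rw [ENNReal.tsum_mul_left, ENNReal.tsum_geometric]

open ENNReal in
lemma lipschitz {Ω : Type*} [MeasurableSpace Ω] (μ : Measure Ω) (Bad : ℤ × ℤ → Set Ω)
    (h : ∀ S : Finset (ℤ × ℤ), μ (⋂ z ∈ S, Bad z) ≤ ((4 : ℝ≥0∞)⁻¹) ^ (2 * S.card)) :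
    ∀ᵐ ω ∂μ, ∃ F : ℤ → ℤ, (∀ x, |F x - F (x + 1)| ≤ 1) ∧ ∀ x, ω ∉ Bad (x, F x) := by
  have key : ∀ x : ℤ, ∀ᵐ ω ∂μ, ∃ n : ℕ, ¬ Rch (fun z => ω ∈ Bad z) x n := by
    intro x
    rw [ae_iff]
    have hC : (1 - 3 * (4 : ℝ≥0∞)⁻¹)⁻¹ ≠ ⊤ := by
      rw [ENNReal.inv_ne_top]
      rw [← pos_iff_ne_zero, tsub_pos_iff_lt, ← div_eq_mul_inv]
      rw [ENNReal.div_lt_iff (by norm_num) (by norm_num)]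
      norm_num
    have ht : Tendsto (fun n : ℕ => ((4 : ℝ≥0∞)⁻¹) ^ n * (1 - 3 * (4 : ℝ≥0∞)⁻¹)⁻¹) atTop (nhds 0) := by
      have := ENNReal.Tendsto.mul_const (ENNReal.tendsto_pow_atTop_nhds_zero_of_lt_one
        (r := (4 : ℝ≥0∞)⁻¹) (by rw [ENNReal.inv_lt_one]; norm_num)) (Or.inr hC)
      simpa using this
    refine le_antisymm (ge_of_tendsto' ht (fun n => ?_)) (zero_le)
    refine (measure_mono ?_).trans (rch_prob μ Bad h x n)
    intro ω hω
    simp only [Set.mem_setOf_eq, not_exists, not_not] at hω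
    exact hω n
  filter_upwards [ae_all_iff.2 key] with ω hω
  exact lip_det hω

end Lipschitz

section Dependent

variable {d : ℕ}

/-- embedding of the plane -/
def emb (d : ℕ) (z : ℤ × ℤ) : Vtx d := fun j => if j.1 = 0 then z.1 else if j.1 = 1 then z.2 else 0

open ENNReal in
lemma bad_product (hd : 2 ≤ d) {ν : Measure (Config d)} {p : ℝ} (h : Bern ν p) {J l : ℕ} (hl : 1 ≤ l)
    (hJ : 1 ≤ J) (hb : ν.real (GoodS J l (0 : Vtx d))ᶜ ≤ (1 / 16 : ℝ) ^ ((10 * J + 1) ^ 2))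
    (S : Finset (ℤ × ℤ)) :
    ν (⋂ z ∈ S, (GoodS J l (emb d z))ᶜ) ≤ ((4 : ℝ≥0∞)⁻¹) ^ (2 * S.card) := by
  classical
  haveI := h.prob
  set R := 10 * J + 1 with hR
  haveI : NeZero R := ⟨by omega⟩
  set f : ℤ × ℤ → ZMod R × ZMod R := fun z => ((z.1 : ZMod R), (z.2 : ZMod R)) with hf
  have hcardZ : (Finset.univ : Finset (ZMod R × ZMod R)).card = R ^ 2 := by
    rw [Finset.card_univ, Fintype.card_prod, ZMod.card, sq]
  obtain ⟨y, hy⟩ : ∃ y : ZMod R × ZMod R, S.card ≤ R ^ 2 * (S.filter (fun z => f z = y)).card := by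
    by_contra hcon
    push Not at hcon
    have h1 : S.card = ∑ y, (S.filter (fun z => f z = y)).card :=
      Finset.card_eq_sum_card_fiberwise (fun z _ => Finset.mem_univ _)
    have h2 : ∑ y : ZMod R × ZMod R, R ^ 2 * (S.filter (fun z => f z = y)).card <
        ∑ y : ZMod R × ZMod R, S.card :=
      Finset.sum_lt_sum_of_nonempty Finset.univ_nonempty (fun y _ => hcon y)
    rw [← Finset.mul_sum, ← h1, Finset.sum_const, hcardZ, smul_eq_mul] at h2
    exact lt_irrefl _ h2
  set S' := S.filter (fun z => f z = y) with hS'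
  have hprod := h.iindep S' (fun z => (Reg l (emb d z) (5 * J)).sym2)
    (fun z => (GoodS J l (emb d z))ᶜ) (fun z _ => (GoodS_det hl hJ _).compl) (by
      intro a ha b hb hab
      refine disjoint_sym2 (Finset.disjoint_left.2 (fun w h1 h2 => hab ?_))
      rw [mem_Reg hl] at h1 h2
      have hfa := (Finset.mem_filter.1 ha).2
      have hfb := (Finset.mem_filter.1 hb).2
      have hfab := hfa.trans hfb.symm
      have aux : ∀ s t : ℤ, ((s : ℤ) : ZMod R) = (t : ZMod R) → |s - t| ≤ 10 * J → s = t := by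
        intro s t hst hle
        have hdvd : (R : ℤ) ∣ s - t := by
          have := (ZMod.intCast_eq_intCast_iff_dvd_sub t s R).1 hst.symm
          exact this
        have h0 : s - t = 0 := by
          apply Int.eq_zero_of_abs_lt_dvd hdvd
          rw [hR]; push_cast; linarith
        linarith
      have hdist : ∀ j, |emb d a j - emb d b j| ≤ 10 * J := by
        intro j
        have e1 := abs_le.1 (h1 j)
        have e2 := abs_le.1 (h2 j)
        push_cast at e1 e2
        rw [abs_le]
        constructor <;> linarith [e1.1, e1.2, e2.1, e2.2]
      have d0 := hdist ⟨0, by omega⟩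
      have d1 := hdist ⟨1, by omega⟩
      simp only [emb, if_true, one_ne_zero, if_false] at d0 d1
      exact Prod.ext (aux _ _ (congrArg Prod.fst hfab) d0) (aux _ _ (congrArg Prod.snd hfab) d1))
  have hle : ν.real (⋂ z ∈ S', (GoodS J l (emb d z))ᶜ) ≤ (1 / 4 : ℝ) ^ (2 * S.card) := by
    rw [hprod]
    calc ∏ z ∈ S', ν.real (GoodS J l (emb d z))ᶜ ≤ ∏ z ∈ S', ((1 / 16 : ℝ) ^ (R ^ 2)) := by
          refine Finset.prod_le_prod (fun z _ => measureReal_nonneg) (fun z _ => ?_)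
          rw [GoodS_real h hl hJ]; exact hb
      _ = (1 / 16 : ℝ) ^ (R ^ 2 * S'.card) := by rw [Finset.prod_const, ← pow_mul]
      _ ≤ (1 / 16 : ℝ) ^ S.card := pow_le_pow_of_le_one (by norm_num) (by norm_num) hy
      _ = _ := by rw [pow_mul]; norm_num
  have hsub : (⋂ z ∈ S, (GoodS J l (emb d z))ᶜ) ⊆ ⋂ z ∈ S', (GoodS J l (emb d z))ᶜ :=
    Set.biInter_subset_biInter_left (fun z hz => (Finset.mem_filter.1 hz).1)
  refine (measure_mono hsub).trans ?_
  rw [← ofReal_measureReal]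
  refine (ENNReal.ofReal_le_ofReal hle).trans (le_of_eq ?_)
  rw [ENNReal.ofReal_pow (by norm_num)]
  congr 1
  rw [one_div, ENNReal.ofReal_inv_of_pos (by norm_num)]
  norm_num

lemma infinite_of_good (hd : 2 ≤ d) {ν : Measure (Config d)} {p : ℝ} (h : Bern ν p) {J l : ℕ}
    (hl : 1 ≤ l) (hJ : 1 ≤ J)
    (hb : ν.real (GoodS J l (0 : Vtx d))ᶜ ≤ (1 / 16 : ℝ) ^ ((10 * J + 1) ^ 2)) :
    0 < ν {ω | (cluster ω).Infinite} := by
  haveI := h.prob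
  have h1 : ∀ᵐ ω ∂ν, ∃ v, {x | Relation.ReflTransGen (openAdj ω) v x}.Infinite := by
    filter_upwards [lipschitz ν (fun z => (GoodS J l (emb d z))ᶜ) (bad_product hd h hl hJ hb)]
      with ω ⟨F, hF1, hF2⟩
    refine tracker (by omega : 1 ≤ d) hl hJ (fun k => emb d ((k : ℤ), F k)) ?_ ?_ ?_
    · intro k j
      simp only [emb]
      split_ifs
      · push_cast; simp
      · have := hF1 k
        push_cast
        exact this
      · simp
    · intro k; simp [emb]
    · intro k
      exact not_not.1 (hF2 k)
  have h2 : ∃ v, ν {ω | {x | Relation.ReflTransGen (openAdj ω) v x}.Infinite} ≠ 0 := by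
    by_contra hcon
    push Not at hcon
    have := measure_iUnion_null hcon
    have h3 : (⋃ v : Vtx d, {ω : Config d | {x | Relation.ReflTransGen (openAdj ω) v x}.Infinite}) =ᵐ[ν]
        Set.univ := by
      filter_upwards [h1] with ω hω
      simp only [eq_iff_iff]
      exact ⟨fun _ => trivial, fun _ => Set.mem_iUnion.2 hω⟩
    rw [measure_congr h3, measure_univ] at this
    exact one_ne_zero this
  obtain ⟨v, hv⟩ := h2
  have hm : Measurable (fun (ω : Config d) (e : Sym2 (Vtx d)) => ω (Sym2.map (trE v) e)) := by fun_prop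
  have h3 := Measure.le_map_apply (μ := ν) hm.aemeasurable {ω | (cluster ω).Infinite}
  rw [(h.map _ (sym2map_inj (trE v))).unique h] at h3
  refine lt_of_lt_of_le (pos_iff_ne_zero.2 hv) (le_trans (measure_mono ?_) h3)
  intro ω hω
  simp only [Set.mem_preimage, Set.mem_setOf_eq] at hω ⊢
  have : {x | Relation.ReflTransGen (openAdj ω) v x} ⊆
      (trE v) '' (cluster (fun e => ω (Sym2.map (trE v) e))) := by
    intro x hx
    refine ⟨x - v, ?_, by rw [trE_apply, sub_add_cancel]⟩
    have := rtg_lift (r := openAdj ω) (s := openAdj (fun e => ω (Sym2.map (trE v) e)))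
      (fun x => x - v) (fun a b hab => ?_) hx
    · simpa [cluster] using this
    · refine ⟨?_, ?_⟩
      · have := hab.1
        simpa [adjV] using this
      · have := hab.2
        simpa [trE_apply] using this
  exact (hω.mono this).of_image _

end Dependent


/-! ### Part 11: conclusion -/

section Final

variable {d : ℕ}

lemma pcrit_nonneg (d : ℕ) : 0 ≤ pcrit d := Real.sInf_nonneg (fun _ h => h.1)

lemma pcrit_le {d : ℕ} {p : ℝ} {ν : Measure (Config d)} (h : Bern ν p)
    (hi : 0 < ν {ω | (cluster ω).Infinite}) : pcrit d ≤ p :=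
  csInf_le ⟨0, fun _ h => h.1⟩ ⟨h.h0, h.h1, ν, ⟨h.prob, h.cyl⟩, hi⟩

lemma pcrit_le_one (d : ℕ) : pcrit d ≤ 1 := by
  unfold pcrit
  rcases Set.eq_empty_or_nonempty {p : ℝ | 0 ≤ p ∧ p ≤ 1 ∧ ∃ μ : Measure (Config d),
    IsBernoulli μ p ∧ 0 < μ {ω | (cluster ω).Infinite}} with h | ⟨q, hq⟩
  · rw [h, Real.sInf_empty]; exact zero_le_one
  · exact (csInf_le ⟨0, fun _ h => h.1⟩ hq).trans hq.2.1

lemma pos_of_vol (hd : 1 ≤ d) {μ : Measure (Config d)} {p : ℝ} (h : Bern μ p)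
    {c1 δ : ℝ} (hc1 : 0 < c1) (hδ : 0 < δ) (hA : ∀ n, δ ≤ μ.real (VolA c1 n 0)) : 0 < p := by
  haveI := h.prob
  by_contra hp
  have hp0 : p = 0 := le_antisymm (not_lt.1 hp) h.h0
  obtain ⟨N, hN⟩ := exists_nat_ge (2 / c1 + 1)
  have hN1 : (1 : ℝ) ≤ N := by
    have : 0 < 2 / c1 := by positivity
    linarith
  have hbig : 2 ≤ c1 * (N : ℝ) ^ d := by
    have h1 : (N : ℝ) ≤ (N : ℝ) ^ d := le_self_pow₀ hN1 (by omega)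
    have h2 : 2 / c1 ≤ (N : ℝ) ^ d := by linarith
    rw [div_le_iff₀ hc1] at h2
    linarith
  have hcyl := h.cyl (Box (0 : Vtx d) N).sym2 (fun _ => false)
  rw [hp0] at hcyl
  simp only [Bool.false_eq_true, if_false, sub_zero, ENNReal.ofReal_one, Finset.prod_const_one]
    at hcyl
  have hdet : DetBy (Box (0 : Vtx d) N).sym2
      {ω : Config d | ∀ e ∈ (Box (0 : Vtx d) N).sym2, ω e = false} := by
    intro ω ω' hh
    refine forall_congr' (fun e => forall_congr' (fun he => ?_))
    rw [hh e he]
  have hsub : VolA c1 N (0 : Vtx d) ⊆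
      {ω : Config d | ∀ e ∈ (Box (0 : Vtx d) N).sym2, ω e = false}ᶜ := by
    intro ω hω hcl
    have hv : c1 * (N : ℝ) ^ d ≤ (Cl ω (Box 0 N) 0).card := hω N le_rfl
    have hcard : (Cl ω (Box (0 : Vtx d) N) 0).card ≤ 1 := by
      rw [Finset.card_le_one]
      have key : ∀ y ∈ Cl ω (Box (0 : Vtx d) N) 0, y = 0 := by
        intro y hy
        have hc := (mem_Cl.1 hy).2
        unfold Conn at hc
        induction hc with
        | refl => rfl
        | tail _ hbc _ =>
          obtain ⟨h1, h2, h3⟩ := hbc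
          have := hcl _ (Finset.mk_mem_sym2_iff.2 ⟨h1, h2⟩)
          rw [h3.2] at this
          exact absurd this (by simp)
      intro a ha b hb
      rw [key a ha, key b hb]
    have : ((Cl ω (Box (0 : Vtx d) N) 0).card : ℝ) ≤ 1 := by exact_mod_cast hcard
    linarith
  have h1 := (hA N).trans (measureReal_mono hsub)
  rw [measureReal_compl hdet.meas, probReal_univ, Measure.real, hcyl] at h1
  simp at h1
  linarith

lemma null_event (hd : 2 ≤ d) {μ : Measure (Config d)} (hμ : IsBernoulli μ (pcrit d))
    {c : ℝ} (hc : 0 < c) (n0 : ℕ) :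
    μ {ω | ∀ n : ℕ, n0 ≤ n → c ≤ n * anchoredProfile ω n} = 0 := by
  have h : Bern μ (pcrit d) := ⟨pcrit_nonneg d, pcrit_le_one d, hμ.1, hμ.2⟩
  haveI := h.prob
  by_contra hne
  obtain ⟨c1, hc1, hgr⟩ := growth (by omega : 1 ≤ d) hc n0
  set A : Set (Config d) := {ω | ∀ n : ℕ, n0 ≤ n → c ≤ n * anchoredProfile ω n} with hA
  have hδ : 0 < μ.real A := ENNReal.toReal_pos hne (measure_ne_top _ _)
  have hAV : ∀ n, μ.real A ≤ μ.real (VolA c1 n 0) := fun n =>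
    measureReal_mono (fun ω hω N _ => hgr ω hω N)
  have hp : 0 < pcrit d := pos_of_vol (by omega) h hc1 hδ hAV
  obtain ⟨J, hJ, hco⟩ := coarse (by omega : 1 ≤ d) h hp hc1 hδ hAV
  set M : ℕ := (2 * (J + 1) + 1) ^ d * K0 d + 1 with hM
  have hMpos : (0 : ℝ) < M := by
    have : 0 < M := by omega
    exact_mod_cast this
  set t : ℝ := (1 / 16 : ℝ) ^ ((10 * J + 1) ^ 2) with ht
  have htpos : 0 < t := by positivity
  obtain ⟨l, hl, hg1, hg2⟩ := hco (t / 2 / M) (by positivity)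
  have hgs := GoodS_prob hg1 hg2 (0 : Vtx d)
  rw [← hM, mul_div_cancel₀ _ hMpos.ne'] at hgs
  obtain ⟨p', hp'0, hp', ν, hν, hνb⟩ := bern_continuity hp h (GoodS_det hl hJ 0).compl
    (lt_of_le_of_lt hgs (by linarith : t / 2 < t))
  have := pcrit_le hν (infinite_of_good hd hν hl hJ hνb.le)
  linarith

lemma anchoredProfile_nonneg (ω : Config d) (n : ℕ) : 0 ≤ anchoredProfile ω n := by
  refine Real.sInf_nonneg ?_
  rintro r ⟨H, _, _, _, _, _, rfl⟩
  positivity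

lemma liminf_ne {f : ℕ → ℝ} (hf : ∀ n, 0 ≤ f n) (h : liminf f atTop ≠ 0) :
    ∃ k n0 : ℕ, ∀ n, n0 ≤ n → 1 / ((k : ℝ) + 1) ≤ f n := by
  rw [liminf_eq] at h
  by_contra hcon
  push Not at hcon
  have hub : ∀ a ∈ {a | ∀ᶠ n in atTop, a ≤ f n}, a ≤ 0 := by
    intro a ha
    by_contra hpos
    push Not at hpos
    obtain ⟨k, hk⟩ := exists_nat_one_div_lt hpos
    obtain ⟨n0, hn0⟩ := eventually_atTop.1 ha
    obtain ⟨n, hn, hlt⟩ := hcon k n0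
    linarith [hn0 n hn]
  have h0 : (0 : ℝ) ∈ {a | ∀ᶠ n in atTop, a ≤ f n} := Eventually.of_forall hf
  exact h (le_antisymm (csSup_le ⟨0, h0⟩ hub) (le_csSup ⟨0, hub⟩ h0))

end Final

/-- main theorem of the paper: for critical bond percolation on `ℤ^d`,
`d ≥ 2`, almost surely `liminf_n n·φ̂_n(p_c) = 0`. -/
theorem liminf_anchored_profile_at_pc (d : ℕ) (hd : 2 ≤ d)
    (μ : Measure (Config d)) (hμ : IsBernoulli μ (pcrit d)) :
    μ {ω | liminf (fun n : ℕ => (n : ℝ) * anchoredProfile ω n) atTop = 0} = 1 := by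
  haveI := hμ.1
  have hnull : μ (⋃ k : ℕ, ⋃ n0 : ℕ,
      {ω : Config d | ∀ n : ℕ, n0 ≤ n → 1 / ((k : ℝ) + 1) ≤ n * anchoredProfile ω n}) = 0 :=
    measure_iUnion_null (fun k => measure_iUnion_null (fun n0 =>
      null_event hd hμ (by positivity) n0))
  have hae : ∀ᵐ ω ∂μ, liminf (fun n : ℕ => (n : ℝ) * anchoredProfile ω n) atTop = 0 := by
    rw [ae_iff]
    refine measure_mono_null ?_ hnull
    intro ω hω
    obtain ⟨k, n0, h⟩ := liminf_ne
      (fun n => mul_nonneg (Nat.cast_nonneg n) (anchoredProfile_nonneg ω n)) hω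
    exact Set.mem_iUnion.2 ⟨k, Set.mem_iUnion.2 ⟨n0, h⟩⟩
  have huniv : {ω | liminf (fun n : ℕ => (n : ℝ) * anchoredProfile ω n) atTop = 0} =ᵐ[μ]
      (Set.univ : Set (Config d)) := by
    filter_upwards [hae] with ω hω
    simp only [eq_iff_iff]
    exact ⟨fun _ => trivial, fun _ => hω⟩
  rw [measure_congr huniv, measure_univ]
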